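/- Let C be a regular, irreducible curve that is projective over a field k, with function field F = k(C), arithmetic genus t ≥ 1, and a k-rational point O; let S = { P in C : RR_{3t}((P)) ≠ {0} }, S_d = S ∩ C_d, S_{≥d} = S ∩ C_{≥d}, and, for 2t ≤ d ≤ 3t, let F_d' = L_{3t} + ⟨ {f_R, l} : R a closed point not in S with 2t+1 ≤ deg(R) ≤ d, l a nonzero element of RR_{3t} ⟩. Then for each d = 2t+1, …, 3t, the tame symbol induces isomorphisms F_d' / F_{d−1}' ≅ ∐_{P ∈ C_d \ S_d} k(P)^* and K₂(F) / F_{d−1}' ≅ ∐_{P ∈ C_{≥d} \ S_{≥d}} k(P)^*. -/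

import Mathlib

open scoped TensorProduct

noncomputable section

/-- The set of Steinberg relations in `Fˣ ⊗_ℤ Fˣ` (written additively):
the elements `a ⊗ b` with `a + b = 1` in `F`. -/
def SteinbergSet (F : Type*) [Field F] :
    Set (TensorProduct ℤ (Additive Fˣ) (Additive Fˣ)) :=
  { x | ∃ a b : Fˣ, (a : F) + (b : F) = 1 ∧
      x = Additive.ofMul a ⊗ₜ[ℤ] Additive.ofMul b }

/-- Milnor's `K₂` of a field, via Matsumoto's presentation. -/
abbrev K2 (F : Type*) [Field F] :=
  (TensorProduct ℤ (Additive Fˣ) (Additive Fˣ)) ⧸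
    Submodule.span ℤ (SteinbergSet F)

/-- The symbol `{f, g}` in `K₂(F)`. -/
def symbol {F : Type*} [Field F] (f g : Fˣ) : K2 F :=
  Submodule.Quotient.mk (Additive.ofMul f ⊗ₜ[ℤ] Additive.ofMul g)

/-- The degree of a divisor `D` on the curve: `∑_P deg(P) · D(P)`,
where `deg P = [k(P) : k]`. -/
def divDeg (k : Type*) [Field k] {Pt : Type*} (res : Pt → Type*)
    [∀ P, Field (res P)] [∀ P, Algebra k (res P)] (D : Pt →₀ ℤ) : ℤ :=
  ∑ᶠ P, (Module.finrank k (res P) : ℤ) * D P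

/-- Axioms for a regular, irreducible curve `C`, projective over a field `k`, with
`H⁰(C, O_C) = k`, presented through: its function field `F = k(C)`, its set `Pt` of
closed points, the residue fields `res P = k(P)`, the normalized valuations `ord P`,
the evaluation maps `ev P` (evaluation at `P` of functions regular at `P`), the
Riemann-Roch spaces `L D = H⁰(C, O_C(D))`, and the arithmetic genus
`t = dim_k H¹(C, O_C)`, characterized by the Riemann-Roch relations. -/
structure IsProjCurve (k F : Type*) [Field k] [Field F] [Algebra k F]
    {Pt : Type*} (res : Pt → Type*) [∀ P, Field (res P)] [∀ P, Algebra k (res P)]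
    (ord : Pt → F → ℤ) (ev : ∀ P, F → res P)
    (L : (Pt →₀ ℤ) → Submodule k F) (t : ℕ) : Prop where
  finiteDimensional_res : ∀ P, FiniteDimensional k (res P)
  ord_mul : ∀ P (f g : F), f ≠ 0 → g ≠ 0 → ord P (f * g) = ord P f + ord P g
  ord_add : ∀ P (f g : F), f ≠ 0 → g ≠ 0 → f + g ≠ 0 →
      min (ord P f) (ord P g) ≤ ord P (f + g)
  ord_algebraMap : ∀ P (c : k), c ≠ 0 → ord P (algebraMap k F c) = 0
  ord_uniformizer : ∀ P, ∃ f : F, f ≠ 0 ∧ ord P f = 1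
  ord_separates : ∀ P Q, (∀ f : F, ord P f = ord Q f) → P = Q
  support_finite : ∀ f : F, f ≠ 0 → {P | ord P f ≠ 0}.Finite
  degree_formula : ∀ f : F, f ≠ 0 →
      ∑ᶠ P, (Module.finrank k (res P) : ℤ) * ord P f = 0
  ev_zero : ∀ P, ev P 0 = 0
  ev_one : ∀ P, ev P 1 = 1
  ev_add : ∀ P (f g : F), f ≠ 0 → g ≠ 0 → 0 ≤ ord P f → 0 ≤ ord P g →
      ev P (f + g) = ev P f + ev P g
  ev_mul : ∀ P (f g : F), f ≠ 0 → g ≠ 0 → 0 ≤ ord P f → 0 ≤ ord P g →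
      ev P (f * g) = ev P f * ev P g
  ev_algebraMap : ∀ P (c : k), ev P (algebraMap k F c) = algebraMap k (res P) c
  ev_eq_zero_iff : ∀ P (f : F), f ≠ 0 → 0 ≤ ord P f → (ev P f = 0 ↔ 0 < ord P f)
  ev_surjective : ∀ P (y : res P), ∃ f : F, f ≠ 0 ∧ 0 ≤ ord P f ∧ ev P f = y
  mem_L : ∀ (D : Pt →₀ ℤ) (f : F), f ∈ L D ↔ (f ≠ 0 → ∀ P, 0 ≤ D P + ord P f)
  finiteDimensional_L : ∀ D, FiniteDimensional k (L D)
  global_sections : ∀ f : F, f ∈ L 0 ↔ ∃ c : k, algebraMap k F c = f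
  rr_ineq : ∀ D : Pt →₀ ℤ,
      divDeg k res D + 1 - t ≤ (Module.finrank k (L D) : ℤ)
  rr_eq : ∀ D : Pt →₀ ℤ, 2 * (t : ℤ) - 2 < divDeg k res D →
      (Module.finrank k (L D) : ℤ) = divDeg k res D + 1 - t

/-- `T` is the tame symbol `K₂(F) → ∐_{P} k(P)^*`: it is determined by
`T_P({f,g}) = (-1)^{ord_P(f)·ord_P(g)} (f^{ord_P(g)} / g^{ord_P(f)})(P)`. -/
def IsTameSymbol {F : Type*} [Field F] {Pt : Type*} {res : Pt → Type*}
    [∀ P, Field (res P)]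
    (ord : Pt → F → ℤ) (ev : ∀ P, F → res P)
    (T : K2 F →+ Π₀ P : Pt, Additive ((res P)ˣ)) : Prop :=
  ∀ (f g : Fˣ) (P : Pt),
    ((Additive.toMul (T (symbol f g) P) : (res P)ˣ) : res P) =
      ev P (((-1 : Fˣ) ^ (ord P (f : F) * ord P (g : F)) *
        f ^ (ord P (g : F)) * g ^ (-ord P (f : F)) : Fˣ) : F)

/-- `L_d`: the subgroup of `K₂(F)` generated by the symbols `{l, m}` with `l, m`
nonzero elements of the Riemann-Roch space `H⁰(C, O_C(d(O)))`. -/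
def Lsub {k F : Type*} [Field k] [Field F] [Algebra k F] {Pt : Type*}
    (L : (Pt →₀ ℤ) → Submodule k F) (O : Pt) (d : ℤ) : AddSubgroup (K2 F) :=
  AddSubgroup.closure
    { x | ∃ l m : Fˣ, (l : F) ∈ L (Finsupp.single O d) ∧
        (m : F) ∈ L (Finsupp.single O d) ∧ x = symbol l m }
/-- `F'_d`: the subgroup
`L_{3t} + ⟨{f_R, l} : R ∉ S, 2t + 1 ≤ deg(R) ≤ d, l ∈ RR_{3t}^*⟩` of `K₂(F)`
(Definition 4.2(2) of the paper). -/
def Fsub' (k : Type*) [Field k] {F : Type*} [Field F] [Algebra k F]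
    {Pt : Type*} (res : Pt → Type*) [∀ P, Field (res P)] [∀ P, Algebra k (res P)]
    (L : (Pt →₀ ℤ) → Submodule k F) (O : Pt) (t : ℕ) (fR : Pt → Fˣ) (S : Set Pt)
    (d : ℕ) : AddSubgroup (K2 F) :=
  Lsub L O (3 * t : ℤ) ⊔ AddSubgroup.closure
    { x | ∃ (R : Pt) (l : Fˣ), R ∉ S ∧
        2 * t + 1 ≤ Module.finrank k (res R) ∧ Module.finrank k (res R) ≤ d ∧
        (l : F) ∈ L (Finsupp.single O (3 * t : ℤ)) ∧ x = symbol (fR R) l }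

/-!
Let `K_e` be the subgroup of `K₂(F)` generated by the symbols whose entries are units at all points
`P ∉ S` of degree at least `e`. Up to functions in `L(3t(O))` and the `f_P` with `deg P < e`, a
divisor supported in `S` and in degrees below `e` can be moved to an effective divisor of degree at
most `t`, so these functions generate the units in question. If `P ≠ Q` have the same degree `e`, a
dimension count gives a relation `a f_P + b f_Q = c` with `a, b ∈ L(3t(O))` and `c ∈ L((e-1)(O))`,
and the Steinberg relation then expresses `{f_P, f_Q}` through symbols with at least one entry that
is a unit in degrees at least `e`. Hence `K_{e+1}` is generated by `K_e` and the symbols `{f_P, v}`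
with `deg P = e` and `v` such a unit.

Modulo `K_e` the symbol `{f_P, v}` depends only on `v(P)`. For `v ∈ L(n(O))` this holds because a
difference that vanishes at `P` is divisible by `f_P`. The values at `P` of these spaces satisfy
Riemann's inequality, which is enough to write every element of `k(P)^*` as a quotient of two
such values and to see, as Bass and Tate do for the projective line, that the map so obtained is
a well-defined homomorphism `k(P)^* → K_{e+1} / K_e`. Up to sign it inverts the tame symbol, so
`K_e` is the common kernel of the tame symbols at the points `P ∉ S` of degree at least `e`. Finally
`F'_d = K_{d+1}` for `2t ≤ d ≤ 3t`: for `d = 2t` because points outside `S` have degree at least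
`2t + 1`, and then by induction, since quotients of elements of `L(3t(O))` already take all values
at points of degree at most `3t + 1`.
-/

section Symbols

variable {F : Type*} [Field F]

lemma symbol_mul_left (f g h : Fˣ) : symbol (f * g) h = symbol f h + symbol g h := by
  simp only [symbol, ofMul_mul, TensorProduct.add_tmul, Submodule.Quotient.mk_add]

lemma symbol_mul_right (f g h : Fˣ) : symbol f (g * h) = symbol f g + symbol f h := by
  simp only [symbol, ofMul_mul, TensorProduct.tmul_add, Submodule.Quotient.mk_add]

lemma symbol_one_left (g : Fˣ) : symbol 1 g = 0 := by
  simpa using symbol_mul_left 1 1 g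

lemma symbol_one_right (f : Fˣ) : symbol f 1 = 0 := by
  simpa using symbol_mul_right f 1 1

lemma symbol_inv_left (f g : Fˣ) : symbol f⁻¹ g = -symbol f g := by
  rw [eq_neg_iff_add_eq_zero, ← symbol_mul_left, inv_mul_cancel, symbol_one_left]

lemma symbol_inv_right (f g : Fˣ) : symbol f g⁻¹ = -symbol f g := by
  rw [eq_neg_iff_add_eq_zero, ← symbol_mul_right, inv_mul_cancel, symbol_one_right]

lemma symbol_div_right (f g h : Fˣ) : symbol f (g / h) = symbol f g - symbol f h := by
  rw [div_eq_mul_inv, symbol_mul_right, symbol_inv_right, sub_eq_add_neg]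

lemma symbol_eq_zero_of_add_eq_one {a b : Fˣ} (h : (a : F) + b = 1) : symbol a b = 0 :=
  (Submodule.Quotient.mk_eq_zero _).2 (Submodule.subset_span ⟨a, b, h, rfl⟩)

lemma symbol_div_div_eq_zero {x y z : Fˣ} (h : (x : F) + y = z) :
    symbol (x / z) (y / z) = 0 := by
  apply symbol_eq_zero_of_add_eq_one
  rw [Units.val_div_eq_div_val, Units.val_div_eq_div_val, ← add_div, h, div_self z.ne_zero]

lemma symbol_neg_self (a : Fˣ) : symbol a (-a) = 0 := by
  by_cases h1 : a = 1
  · rw [h1, symbol_one_left]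
  have hne : (1 : F) - a ≠ 0 := fun h => h1 (Units.ext (sub_eq_zero.1 h).symm)
  have hne' : (1 : F) - (a⁻¹ : Fˣ) ≠ 0 := fun h =>
    h1 (inv_eq_one.1 (Units.ext (sub_eq_zero.1 h).symm))
  have e : -a = Units.mk0 _ hne / Units.mk0 _ hne' := by
    rw [eq_div_iff_mul_eq']
    ext
    simp [mul_sub]
  have h2 : symbol a (Units.mk0 _ hne) = 0 := symbol_eq_zero_of_add_eq_one (by simp)
  have h3 : symbol a⁻¹ (Units.mk0 _ hne') = 0 := symbol_eq_zero_of_add_eq_one (by simp)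
  rw [symbol_inv_left, neg_eq_zero] at h3
  rw [e, symbol_div_right, h2, h3, sub_zero]

lemma symbol_self (a : Fˣ) : symbol a a = symbol a (-1) := by
  have h := symbol_neg_self a
  rw [← neg_one_mul, symbol_mul_right] at h
  have h2 : symbol a (-1) + symbol a (-1) = 0 := by
    rw [← symbol_mul_right, neg_one_mul, neg_neg, symbol_one_right]
  exact add_left_cancel (h.trans h2.symm)

lemma symbol_swap (a b : Fˣ) : symbol a b = -symbol b a := by
  have h : symbol (a * b) (-(a * b)) = 0 := symbol_neg_self _
  have ha := symbol_neg_self a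
  have hb := symbol_neg_self b
  have e1 : symbol a (-(a * b)) = symbol a (-a) + symbol a b := by
    rw [← symbol_mul_right, neg_mul]
  have e2 : symbol b (-(a * b)) = symbol b (-b) + symbol b a := by
    rw [← symbol_mul_right, neg_mul, mul_comm]
  rw [symbol_mul_left, e1, e2, ha, hb, zero_add, zero_add] at h
  exact eq_neg_of_add_eq_zero_left h

lemma symbol_eq_of_mul_add_mul_eq {a b c f g : Fˣ} (h : (a : F) * f + b * g = c) :
    symbol f g = symbol g (a / c) - symbol f (b / c) - symbol (a / c) (b / c) := by
  have h0 : symbol (a * f / c) (b * g / c) = 0 := symbol_div_div_eq_zero h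
  rw [mul_div_right_comm, mul_div_right_comm, symbol_mul_left, symbol_mul_right,
    symbol_mul_right, symbol_swap (a / c) g] at h0
  rw [← sub_eq_zero, ← h0]
  abel

/-- The subgroup of `K₂(F)` generated by the symbols with both entries in `V`. -/
def symbolSubgroup (V : Subgroup Fˣ) : AddSubgroup (K2 F) :=
  AddSubgroup.closure {x | ∃ a ∈ V, ∃ b ∈ V, x = symbol a b}

lemma symbol_mem_symbolSubgroup {V : Subgroup Fˣ} {a b : Fˣ} (ha : a ∈ V) (hb : b ∈ V) :
    symbol a b ∈ symbolSubgroup V :=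
  AddSubgroup.subset_closure ⟨a, ha, b, hb, rfl⟩

lemma symbol_mem_of_mem_closure {s : Set Fˣ} {B : AddSubgroup (K2 F)}
    (h : ∀ a ∈ s, ∀ b ∈ s, symbol a b ∈ B) {a b : Fˣ} (ha : a ∈ Subgroup.closure s)
    (hb : b ∈ Subgroup.closure s) : symbol a b ∈ B := by
  induction ha, hb using Subgroup.closure_induction₂ with
  | mem x y hx hy => exact h x hx y hy
  | one_left x _ => rw [symbol_one_left]; exact B.zero_mem
  | one_right x _ => rw [symbol_one_right]; exact B.zero_mem
  | mul_left x y z _ _ _ h1 h2 => rw [symbol_mul_left]; exact B.add_mem h1 h2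
  | mul_right y z x _ _ _ h1 h2 => rw [symbol_mul_right]; exact B.add_mem h1 h2
  | inv_left x y _ _ h1 => rw [symbol_inv_left]; exact B.neg_mem h1
  | inv_right x y _ _ h1 => rw [symbol_inv_right]; exact B.neg_mem h1

lemma symbolSubgroup_closure_le {s : Set Fˣ} {B : AddSubgroup (K2 F)}
    (h : ∀ a ∈ s, ∀ b ∈ s, symbol a b ∈ B) :
    symbolSubgroup (Subgroup.closure s) ≤ B := by
  rw [symbolSubgroup, AddSubgroup.closure_le]
  rintro _ ⟨a, ha, b, hb, rfl⟩
  exact symbol_mem_of_mem_closure h ha hb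

lemma symbolSubgroup_mono {V W : Subgroup Fˣ} (h : V ≤ W) :
    symbolSubgroup V ≤ symbolSubgroup W :=
  AddSubgroup.closure_mono fun _ ⟨a, ha, b, hb, hx⟩ => ⟨a, h ha, b, h hb, hx⟩

lemma symbol_sub_symbol_mem {V : Subgroup Fˣ} {f h x y : Fˣ} (hh : h ∈ V) (hx : x ∈ V)
    (hy : y ∈ V) (e : (x : F) - y = f * h) :
    symbol f x - symbol f y ∈ symbolSubgroup V := by
  have h0 : symbol (f * h / x) (y / x) = 0 :=
    symbol_div_div_eq_zero (by rw [Units.val_mul, ← e, sub_add_cancel])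
  rw [mul_div_assoc, symbol_mul_left, symbol_div_right f] at h0
  have h1 := symbol_mem_symbolSubgroup (V.div_mem hh hx) (V.div_mem hy hx)
  rw [← neg_sub, neg_eq_of_add_eq_zero_right h0]
  exact h1

end Symbols

section CommonMultiplier

variable {k E : Type*} [Field k] [Field E] [Algebra k E]

lemma exists_units_mem_of_finrank_pos {A : Submodule k E} (hA : 0 < Module.finrank k A) :
    ∃ u : Eˣ, (u : E) ∈ A := by
  have hbot : A ≠ ⊥ := by
    rintro rfl
    simp at hA
  obtain ⟨x, hx, hx0⟩ := Submodule.exists_mem_ne_zero_of_ne_bot hbot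
  exact ⟨Units.mk0 x hx0, hx⟩

lemma mem_map_toLinearEquiv_inv_iff {A : Submodule k E} {α : Eˣ} {x : E} :
    x ∈ A.map (DistribMulAction.toLinearEquiv k E α⁻¹ : E →ₗ[k] E) ↔ α * x ∈ A := by
  rw [Submodule.mem_map_equiv, DistribMulAction.toLinearEquiv_symm_apply, inv_inv,
    Units.smul_def, smul_eq_mul]

variable [FiniteDimensional k E]

lemma finrank_add_finrank_le_finrank_inf_add (A B : Submodule k E) :
    Module.finrank k A + Module.finrank k B ≤
      Module.finrank k (A ⊓ B : Submodule k E) + Module.finrank k E := by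
  have h1 := Submodule.finrank_sup_add_finrank_inf_eq A B
  have h2 := Submodule.finrank_le (A ⊔ B)
  omega

lemma exists_units_mul_mem_pair {A B : Submodule k E} (α β : Eˣ)
    (h : Module.finrank k E < Module.finrank k A + Module.finrank k B) :
    ∃ c : Eˣ, ((α * c : Eˣ) : E) ∈ A ∧ ((β * c : Eˣ) : E) ∈ B := by
  have h1 := finrank_add_finrank_le_finrank_inf_add
    (A.map (DistribMulAction.toLinearEquiv k E α⁻¹ : E →ₗ[k] E))
    (B.map (DistribMulAction.toLinearEquiv k E β⁻¹ : E →ₗ[k] E))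
  rw [LinearEquiv.finrank_map_eq, LinearEquiv.finrank_map_eq] at h1
  obtain ⟨c, hcA, hcB⟩ := exists_units_mem_of_finrank_pos (Nat.pos_of_lt_add_left (h.trans_le h1))
  exact ⟨c, mem_map_toLinearEquiv_inv_iff.1 hcA, mem_map_toLinearEquiv_inv_iff.1 hcB⟩

lemma exists_units_mul_mem_triple {A : Submodule k E} (α β γ : Eˣ)
    (h : 2 * Module.finrank k E < 3 * Module.finrank k A) :
    ∃ c : Eˣ, ((α * c : Eˣ) : E) ∈ A ∧ ((β * c : Eˣ) : E) ∈ A ∧ ((γ * c : Eˣ) : E) ∈ A := by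
  let translate (u : Eˣ) := A.map (DistribMulAction.toLinearEquiv k E u⁻¹ : E →ₗ[k] E)
  have hrank (u : Eˣ) : Module.finrank k (translate u) = Module.finrank k A :=
    LinearEquiv.finrank_map_eq _ _
  have h1 := finrank_add_finrank_le_finrank_inf_add (translate α) (translate β)
  have h2 := finrank_add_finrank_le_finrank_inf_add (translate α ⊓ translate β) (translate γ)
  rw [hrank, hrank] at h1
  rw [hrank] at h2
  obtain ⟨c, ⟨hα, hβ⟩, hγ⟩ := exists_units_mem_of_finrank_pos
    (A := translate α ⊓ translate β ⊓ translate γ) (by omega)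
  exact ⟨c, mem_map_toLinearEquiv_inv_iff.1 hα, mem_map_toLinearEquiv_inv_iff.1 hβ,
    mem_map_toLinearEquiv_inv_iff.1 hγ⟩

end CommonMultiplier

section BassTate

variable {k E : Type*} [Field k] [Field E] [Algebra k E] {U : ℕ → Submodule k E} {t w : ℕ}
  {Q : Type*} [AddCommGroup Q] {ψ : Eˣ → Q}

/-- An increasing sequence of subspaces whose dimensions satisfy Riemann's inequality of genus `t`
below the bound `w`, such as the values at a point of the Riemann–Roch spaces `L(n(O))`. -/
structure IsRiemannFiltration (U : ℕ → Submodule k E) (t w : ℕ) : Prop where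
  monotone : Monotone U
  le_finrank : ∀ n < w, n + 1 ≤ Module.finrank k (U n) + t

/-- `ψ` respects the relations `x y = x' y'` between nonzero elements of the filtration `U` of
levels below `w`, provided both products have total level less than `2 [E : k]`. -/
def RespectsProducts (U : ℕ → Submodule k E) (w : ℕ) (ψ : Eˣ → Q) : Prop :=
  ∀ ⦃a b a' b' : ℕ⦄, a < w → b < w → a' < w → b' < w →
    a + b < 2 * Module.finrank k E → a' + b' < 2 * Module.finrank k E →
    ∀ ⦃x y x' y' : Eˣ⦄, (x : E) ∈ U a → (y : E) ∈ U b → (x' : E) ∈ U a' → (y' : E) ∈ U b' →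
      x * y = x' * y' → ψ x + ψ y = ψ x' + ψ y'

namespace IsRiemannFiltration

variable [FiniteDimensional k E]

lemma exists_mul_mem (hU : IsRiemannFiltration U t w) {a b : ℕ} (ha : a < w) (hb : b < w)
    (hab : Module.finrank k E + 2 * t ≤ a + b + 1) (α β : Eˣ) :
    ∃ c : Eˣ, ((α * c : Eˣ) : E) ∈ U a ∧ ((β * c : Eˣ) : E) ∈ U b :=
  exists_units_mul_mem_pair α β (by have := hU.le_finrank a ha; have := hU.le_finrank b hb; omega)

lemma exists_quotient_map (hU : IsRiemannFiltration U t w) (hψ : RespectsProducts U w ψ)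
    (ht : 2 * t < Module.finrank k E) (hw : Module.finrank k E ≤ w) :
    ∃ Φ : Eˣ → Q, ∀ x y : Eˣ, (x : E) ∈ U (Module.finrank k E - 1) →
      (y : E) ∈ U (Module.finrank k E - 1) → ψ x - ψ y = Φ (x / y) := by
  have hlt : Module.finrank k E - 1 < w := by omega
  choose c hαc hc using fun α : Eˣ => hU.exists_mul_mem hlt hlt (by omega) α 1
  refine ⟨fun α => ψ (α * c α) - ψ (1 * c α), fun x y hx hy => ?_⟩
  rw [sub_eq_sub_iff_add_eq_add]
  refine hψ hlt hlt hlt hlt (by omega) (by omega) hx (hc _) (hαc _) hy ?_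
  rw [one_mul, mul_right_comm, div_mul_cancel]

variable {Φ : Eˣ → Q}
  (hΦ : ∀ x y : Eˣ, (x : E) ∈ U (Module.finrank k E - 1) →
    (y : E) ∈ U (Module.finrank k E - 1) → ψ x - ψ y = Φ (x / y))
include hΦ

lemma sub_eq_of_add_lt (hU : IsRiemannFiltration U t w) (hψ : RespectsProducts U w ψ)
    (ht : 2 * t < Module.finrank k E) (hw : Module.finrank k E ≤ w) {a b : ℕ} (ha : a < w)
    (hb : b < Module.finrank k E) (hab : a + b < 2 * Module.finrank k E) {x y : Eˣ}
    (hx : (x : E) ∈ U a) (hy : (y : E) ∈ U b) : ψ x - ψ y = Φ (x / y) := by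
  induction a generalizing b x y with
  | zero => exact hΦ x y (hU.monotone (Nat.zero_le _) hx) (hU.monotone (by omega) hy)
  | succ a ih =>
    rcases lt_or_ge (a + 1) (Module.finrank k E) with hae | hae
    · exact hΦ x y (hU.monotone (by omega) hx) (hU.monotone (by omega) hy)
    -- Multiplying `x` and `y` by a suitable `c` lowers the level of `x` at the expense of `y`.
    obtain ⟨c, hxc, hyc⟩ := hU.exists_mul_mem (a := a) (b := 2 * Module.finrank k E - 1 - (a + 1))
      (by omega) (by omega) (by omega) x y
    have hmul : ψ x + ψ (y * c) = ψ (x * c) + ψ y :=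
      hψ ha (by omega) (by omega) (by omega) (by omega) (by omega) hx hyc hxc hy
        (by rw [mul_right_comm, mul_assoc])
    rw [sub_eq_sub_iff_add_eq_add.2 hmul, ih (by omega) (by omega) (by omega) hxc hyc,
      mul_div_mul_right_eq_div]

lemma sub_eq_of_mem (hU : IsRiemannFiltration U t w) (hψ : RespectsProducts U w ψ)
    (ht : 2 * t < Module.finrank k E) (hw : Module.finrank k E ≤ w)
    (hwt : w ≤ Module.finrank k E + 2 * t) {n : ℕ} (hn : n < w) {x y : Eˣ}
    (hx : (x : E) ∈ U n) (hy : (y : E) ∈ U n) : ψ x - ψ y = Φ (x / y) := by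
  induction n generalizing x y with
  | zero => exact hΦ x y (hU.monotone (Nat.zero_le _) hx) (hU.monotone (Nat.zero_le _) hy)
  | succ n ih =>
    rcases lt_or_ge (n + 1) (Module.finrank k E) with hne | hne
    · exact hΦ x y (hU.monotone (by omega) hx) (hU.monotone (by omega) hy)
    have hlt : Module.finrank k E - 1 < w := by omega
    obtain ⟨c, hxc, hyc⟩ := hU.exists_mul_mem hlt hlt (by omega) x y
    obtain ⟨z, hz, hcz⟩ := hU.exists_mul_mem (a := Module.finrank k E + 2 * t - 1 - n) (b := n)
      (by omega) (by omega) (by omega) 1 c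
    rw [one_mul] at hz
    -- `ψ u - ψ (u * c)` is the same for `u = x` and `u = y`, as both agree with `u = z`.
    have hshift {u : Eˣ} (hu : (u : E) ∈ U (n + 1))
        (huc : ((u * c : Eˣ) : E) ∈ U (Module.finrank k E - 1)) :
        ψ u - ψ (u * c) = ψ z - ψ (c * z) := by
      have huz : ψ u - ψ z = Φ (u / z) :=
        hU.sub_eq_of_add_lt hΦ hψ ht hw hn (by omega) (by omega) hu hz
      have hucz : ψ (u * c) - ψ (c * z) = Φ (u / z) := by
        rw [ih (by omega) (hU.monotone (by omega) huc) hcz, mul_comm c, mul_div_mul_right_eq_div]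
      rw [sub_eq_sub_iff_sub_eq_sub, huz, hucz]
    have hxy : ψ x - ψ y = ψ (x * c) - ψ (y * c) := by
      rw [← sub_eq_sub_iff_sub_eq_sub, hshift hx hxc, hshift hy hyc]
    rw [hxy, hΦ _ _ hxc hyc, mul_div_mul_right_eq_div]

omit hΦ

/-- The lifting argument of Bass and Tate, for a filtration that satisfies Riemann's inequality. -/
theorem exists_addMonoidHom (hU : IsRiemannFiltration U t w) (hψ : RespectsProducts U w ψ)
    (ht : 2 * t < Module.finrank k E) (hw : Module.finrank k E ≤ w) (htw : 3 * t < w)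
    (hwt : w ≤ Module.finrank k E + 2 * t) :
    ∃ Φ : Additive Eˣ →+ Q, ∀ n < w, ∀ x y : Eˣ, (x : E) ∈ U n → (y : E) ∈ U n →
      Φ (Additive.ofMul (x / y)) = ψ x - ψ y := by
  obtain ⟨Φ, hΦ⟩ := hU.exists_quotient_map hψ ht hw
  have hΦn (n : ℕ) (hn : n < w) (x y : Eˣ) (hx : (x : E) ∈ U n) (hy : (y : E) ∈ U n) :
      Φ (x / y) = ψ x - ψ y := (hU.sub_eq_of_mem hΦ hψ ht hw hwt hn hx hy).symm
  have hmul (α β : Eˣ) : Φ (α * β) = Φ α + Φ β := by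
    have hlt : w - 1 < w := by omega
    obtain ⟨c, hαβc, hβc, hc⟩ := exists_units_mul_mem_triple (A := U (w - 1)) (α * β) β 1
      (by have := hU.le_finrank _ hlt; omega)
    have h1 := hΦn _ hlt _ _ hαβc hc
    have h2 := hΦn _ hlt _ _ hαβc hβc
    have h3 := hΦn _ hlt _ _ hβc hc
    rw [mul_div_mul_right_eq_div] at h1 h2 h3
    rw [div_one] at h1 h3
    rw [mul_div_cancel_right] at h2
    rw [h1, h2, h3, sub_add_sub_cancel]
  exact ⟨AddMonoidHom.mk' (fun α => Φ α.toMul) fun α β => hmul α.toMul β.toMul, hΦn⟩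

end IsRiemannFiltration

end BassTate

section Divisors

variable {k : Type*} [Field k] {Pt : Type*} {res : Pt → Type*}
  [∀ P, Field (res P)] [∀ P, Algebra k (res P)]

lemma divDeg_eq_sum (D : Pt →₀ ℤ) :
    divDeg k res D = D.sum fun P n => (Module.finrank k (res P) : ℤ) * n := by
  refine finsum_eq_sum_of_support_subset _ fun P hP => ?_
  simp only [Function.mem_support, Finset.mem_coe, Finsupp.mem_support_iff] at hP ⊢
  exact right_ne_zero_of_mul hP

lemma divDeg_add (D E : Pt →₀ ℤ) :
    divDeg k res (D + E) = divDeg k res D + divDeg k res E := by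
  classical
  simp only [divDeg_eq_sum]
  exact Finsupp.sum_add_index' (fun _ => mul_zero _) fun _ _ _ => mul_add _ _ _

lemma divDeg_zero : divDeg k res (0 : Pt →₀ ℤ) = 0 := by
  rw [divDeg_eq_sum, Finsupp.sum_zero_index]

lemma divDeg_neg (D : Pt →₀ ℤ) : divDeg k res (-D) = -divDeg k res D := by
  rw [eq_neg_iff_add_eq_zero, ← divDeg_add, neg_add_cancel, divDeg_zero]

lemma divDeg_sub (D E : Pt →₀ ℤ) :
    divDeg k res (D - E) = divDeg k res D - divDeg k res E := by
  rw [sub_eq_add_neg, divDeg_add, divDeg_neg, sub_eq_add_neg]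

lemma divDeg_single (P : Pt) (n : ℤ) :
    divDeg k res (Finsupp.single P n) = Module.finrank k (res P) * n := by
  rw [divDeg_eq_sum, Finsupp.sum_single_index (mul_zero _)]

lemma divDeg_nonneg {E : Pt →₀ ℤ} (hE : 0 ≤ E) : 0 ≤ divDeg k res E := by
  rw [divDeg_eq_sum]
  exact Finset.sum_nonneg fun P _ => mul_nonneg (Nat.cast_nonneg _) (hE P)

lemma finrank_le_divDeg {E : Pt →₀ ℤ} (hE : 0 ≤ E) {P : Pt} (hP : E P ≠ 0) :
    (Module.finrank k (res P) : ℤ) ≤ divDeg k res E := by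
  classical
  have h1 : 1 ≤ E P := by have := hE P; simp only [Finsupp.coe_zero, Pi.zero_apply] at this; omega
  have h2 : 0 ≤ E - Finsupp.single P 1 := fun Q => by
    have := hE Q
    simp only [Finsupp.coe_zero, Pi.zero_apply, Finsupp.coe_sub, Pi.sub_apply,
      Finsupp.single_apply] at this ⊢
    split_ifs with h
    · subst h; omega
    · omega
  have h3 := divDeg_nonneg (k := k) (res := res) h2
  rw [divDeg_sub, divDeg_single] at h3
  linarith

end Divisors

section Curve

variable {k F : Type*} [Field k] [Field F] [Algebra k F]
  {Pt : Type*} {res : Pt → Type*} [∀ P, Field (res P)] [∀ P, Algebra k (res P)]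
  {ord : Pt → F → ℤ} {ev : ∀ P, F → res P} {L : (Pt →₀ ℤ) → Submodule k F} {t : ℕ}
  {O : Pt} {fR : Pt → Fˣ}

local notation "deg(" P ")" => Module.finrank k (res P)

local notation "RR(" n ")" => L (Finsupp.single O n)

namespace IsProjCurve

variable (hC : IsProjCurve k F res ord ev L t)
include hC

lemma ord_one (P : Pt) : ord P 1 = 0 := by
  simpa using hC.ord_algebraMap P 1 one_ne_zero

lemma ord_neg_one (P : Pt) : ord P (-1) = 0 := by
  simpa using hC.ord_algebraMap P (-1) (by simp)

lemma ord_units_mul (P : Pt) (f g : Fˣ) :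
    ord P ((f * g : Fˣ) : F) = ord P (f : F) + ord P (g : F) := by
  rw [Units.val_mul, hC.ord_mul P _ _ f.ne_zero g.ne_zero]

lemma ord_units_inv (P : Pt) (f : Fˣ) : ord P ((f⁻¹ : Fˣ) : F) = -ord P (f : F) := by
  rw [eq_neg_iff_add_eq_zero, ← hC.ord_units_mul, inv_mul_cancel, Units.val_one, hC.ord_one]

lemma ord_units_div (P : Pt) (f g : Fˣ) :
    ord P ((f / g : Fˣ) : F) = ord P (f : F) - ord P (g : F) := by
  rw [div_eq_mul_inv, hC.ord_units_mul, hC.ord_units_inv, sub_eq_add_neg]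

lemma units_mem_L {D : Pt →₀ ℤ} {f : Fˣ} : (f : F) ∈ L D ↔ ∀ P, 0 ≤ D P + ord P (f : F) := by
  simp [hC.mem_L]

lemma L_mono {D E : Pt →₀ ℤ} (h : D ≤ E) : L D ≤ L E := fun f hf => by
  rw [hC.mem_L] at hf ⊢
  exact fun h0 P => (hf h0 P).trans (add_le_add_left (h P) _)

lemma RR_mono {m n : ℤ} (hmn : m ≤ n) : RR(m) ≤ RR(n) :=
  hC.L_mono (Finsupp.single_le_single.2 hmn)

lemma mul_mem_L {D E : Pt →₀ ℤ} {f g : F} (hf : f ∈ L D) (hg : g ∈ L E) :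
    f * g ∈ L (D + E) := by
  rw [hC.mem_L] at *
  intro h P
  have hf0 := left_ne_zero_of_mul h
  have hg0 := right_ne_zero_of_mul h
  have h1 := hf hf0 P
  have h2 := hg hg0 P
  rw [hC.ord_mul P f g hf0 hg0, Finsupp.add_apply]
  linarith

lemma one_mem_L {D : Pt →₀ ℤ} (h : 0 ≤ D) : (1 : F) ∈ L D := by
  rw [hC.mem_L]
  intro _ P
  rw [hC.ord_one, add_zero]
  exact h P

lemma exists_units_mem_L {D : Pt →₀ ℤ} (h : t ≤ divDeg k res D) : ∃ f : Fˣ, (f : F) ∈ L D := by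
  have h1 := hC.rr_ineq D
  have : FiniteDimensional k (L D) := hC.finiteDimensional_L D
  exact exists_units_mem_of_finrank_pos (by omega)

/-- The principal divisor of a nonzero function. -/
def divisor (f : Fˣ) : Pt →₀ ℤ :=
  Finsupp.ofSupportFinite (fun P => ord P (f : F)) (hC.support_finite f f.ne_zero)

lemma divisor_one : hC.divisor 1 = 0 := Finsupp.ext fun P => hC.ord_one P

lemma divisor_mul (f g : Fˣ) : hC.divisor (f * g) = hC.divisor f + hC.divisor g :=
  Finsupp.ext fun P => hC.ord_units_mul P f g

lemma divisor_inv (f : Fˣ) : hC.divisor f⁻¹ = -hC.divisor f :=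
  Finsupp.ext fun P => hC.ord_units_inv P f

lemma divDeg_divisor (f : Fˣ) : divDeg k res (hC.divisor f) = 0 :=
  hC.degree_formula f f.ne_zero

lemma divDeg_add_divisor (D : Pt →₀ ℤ) (f : Fˣ) :
    divDeg k res (D + hC.divisor f) = divDeg k res D := by
  rw [divDeg_add, hC.divDeg_divisor, add_zero]

lemma mem_L_iff_divisor {D : Pt →₀ ℤ} {f : Fˣ} : (f : F) ∈ L D ↔ 0 ≤ D + hC.divisor f :=
  hC.units_mem_L

lemma add_ord_eq_zero_of_divDeg_lt {D : Pt →₀ ℤ} {f : Fˣ} (hf : (f : F) ∈ L D) {P : Pt}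
    (hP : divDeg k res D < deg(P)) : D P + ord P (f : F) = 0 := by
  by_contra h
  have := finrank_le_divDeg (k := k) (res := res) (hC.mem_L_iff_divisor.1 hf) (P := P) h
  rw [hC.divDeg_add_divisor] at this
  omega

lemma mem_L_sub_single {D : Pt →₀ ℤ} {f : Fˣ} (hf : (f : F) ∈ L D) {P : Pt}
    (hP : 0 < D P + ord P (f : F)) : (f : F) ∈ L (D - Finsupp.single P 1) := by
  classical
  rw [hC.units_mem_L] at hf ⊢
  intro Q
  have := hf Q
  rw [Finsupp.sub_apply, Finsupp.single_apply]
  split_ifs with hQ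
  · subst hQ; omega
  · omega

/-- The nonzero functions that are units of the local ring at `P`. -/
def unitsAt (P : Pt) : Subgroup Fˣ where
  carrier := {f | ord P (f : F) = 0}
  one_mem' := hC.ord_one P
  mul_mem' {f g} (hf : ord P (f : F) = 0) (hg : ord P (g : F) = 0) :=
    show ord P ((f * g : Fˣ) : F) = 0 by rw [hC.ord_units_mul, hf, hg, add_zero]
  inv_mem' {f} (hf : ord P (f : F) = 0) :=
    show ord P ((f⁻¹ : Fˣ) : F) = 0 by rw [hC.ord_units_inv, hf, neg_zero]

lemma mem_unitsAt {P : Pt} {f : Fˣ} : f ∈ hC.unitsAt P ↔ ord P (f : F) = 0 := Iff.rfl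

lemma ev_add_of_regular {P : Pt} {f g : F} (hf : f ≠ 0 → 0 ≤ ord P f)
    (hg : g ≠ 0 → 0 ≤ ord P g) : ev P (f + g) = ev P f + ev P g := by
  rcases eq_or_ne f 0 with rfl | hf0
  · rw [zero_add, hC.ev_zero, zero_add]
  rcases eq_or_ne g 0 with rfl | hg0
  · rw [add_zero, hC.ev_zero, add_zero]
  exact hC.ev_add P f g hf0 hg0 (hf hf0) (hg hg0)

lemma ev_smul_of_regular {P : Pt} (c : k) {f : F} (hf : f ≠ 0 → 0 ≤ ord P f) :
    ev P (c • f) = c • ev P f := by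
  rcases eq_or_ne c 0 with rfl | hc
  · rw [zero_smul, zero_smul, hC.ev_zero]
  rcases eq_or_ne f 0 with rfl | hf0
  · rw [smul_zero, hC.ev_zero, smul_zero]
  rw [Algebra.smul_def, hC.ev_mul P _ f ((map_ne_zero _).2 hc) hf0 (hC.ord_algebraMap P c hc).ge
    (hf hf0), hC.ev_algebraMap, Algebra.smul_def]

lemma ev_ne_zero_of_mem_unitsAt {P : Pt} {f : Fˣ} (hf : f ∈ hC.unitsAt P) : ev P (f : F) ≠ 0 := by
  rw [hC.mem_unitsAt] at hf
  rw [ne_eq, hC.ev_eq_zero_iff P f f.ne_zero hf.ge, hf]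
  exact lt_irrefl 0

/-- Evaluation at `P` of the units at `P`. -/
def evalUnits (P : Pt) : hC.unitsAt P →* (res P)ˣ where
  toFun f := Units.mk0 (ev P (f : Fˣ)) (hC.ev_ne_zero_of_mem_unitsAt f.2)
  map_one' := Units.ext (hC.ev_one P)
  map_mul' f g := Units.ext
    (hC.ev_mul P _ _ (f : Fˣ).ne_zero (g : Fˣ).ne_zero (hC.mem_unitsAt.1 f.2).ge
      (hC.mem_unitsAt.1 g.2).ge)

lemma regular_of_mem_L {P : Pt} {D : Pt →₀ ℤ} (hD : D P = 0) {f : F} (hf : f ∈ L D)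
    (h0 : f ≠ 0) : 0 ≤ ord P f := by
  have := (hC.mem_L D f).1 hf h0 P
  rwa [hD, zero_add] at this

/-- Evaluation at `P` of the sections of a divisor not containing `P`. -/
def evalL (D : Pt →₀ ℤ) (P : Pt) (hD : D P = 0) : L D →ₗ[k] res P where
  toFun f := ev P f
  map_add' f g := hC.ev_add_of_regular (hC.regular_of_mem_L hD f.2) (hC.regular_of_mem_L hD g.2)
  map_smul' c f := hC.ev_smul_of_regular c (hC.regular_of_mem_L hD f.2)

lemma ev_sub_of_mem_L {P : Pt} {D : Pt →₀ ℤ} (hD : D P = 0) {f g : F} (hf : f ∈ L D)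
    (hg : g ∈ L D) : ev P (f - g) = ev P f - ev P g :=
  map_sub (hC.evalL D P hD) ⟨f, hf⟩ ⟨g, hg⟩

end IsProjCurve

/-- The points `P` at which some nonzero function of `L(3t(O))` vanishes: the set `S` of the
paper. -/
def specialPoints (L : (Pt →₀ ℤ) → Submodule k F) (t : ℕ) (O : Pt) : Set Pt :=
  {P | L (Finsupp.single O (3 * t : ℤ) - Finsupp.single P 1) ≠ ⊥}

local notation "S" => specialPoints L t O

/-- A curve of positive genus with a rational point `O`. -/
structure IsPointedCurve (k F : Type*) [Field k] [Field F] [Algebra k F]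
    {Pt : Type*} (res : Pt → Type*) [∀ P, Field (res P)] [∀ P, Algebra k (res P)]
    (ord : Pt → F → ℤ) (ev : ∀ P, F → res P) (L : (Pt →₀ ℤ) → Submodule k F) (t : ℕ)
    (O : Pt) : Prop extends IsProjCurve k F res ord ev L t where
  one_le_genus : 1 ≤ t
  finrank_O : Module.finrank k (res O) = 1

/-- A pointed curve with functions `fR R` of divisor `(R) - D - (deg R - t)(O)`, where `D` is
effective of degree `t`, for all points `R` that are not special. -/
structure IsUniformizedCurve (k F : Type*) [Field k] [Field F] [Algebra k F]
    {Pt : Type*} (res : Pt → Type*) [∀ P, Field (res P)] [∀ P, Algebra k (res P)]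
    (ord : Pt → F → ℤ) (ev : ∀ P, F → res P) (L : (Pt →₀ ℤ) → Submodule k F) (t : ℕ)
    (O : Pt) (fR : Pt → Fˣ) : Prop extends IsPointedCurve k F res ord ev L t O where
  exists_ord_fR : ∀ R ∉ specialPoints L t O, ∃ D : Pt →₀ ℤ, 0 ≤ D ∧ divDeg k res D = t ∧
    ∀ Q, ord Q (fR R : F) =
      (Finsupp.single R 1 - D - Finsupp.single O ((Module.finrank k (res R) : ℤ) - t) :
        Pt →₀ ℤ) Q

namespace IsPointedCurve

variable (h : IsPointedCurve k F res ord ev L t O)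
include h

lemma divDeg_single_O (n : ℤ) : divDeg k res (Finsupp.single O n) = n := by
  rw [divDeg_single, h.finrank_O, Nat.cast_one, one_mul]

omit h in
lemma notMem_L_of_notMem_specialPoints {P : Pt} (hP : P ∉ S) (f : Fˣ) :
    (f : F) ∉ L (Finsupp.single O (3 * t : ℤ) - Finsupp.single P 1) := by
  rw [not_not.1 hP, Submodule.mem_bot]
  exact f.ne_zero

lemma two_mul_genus_lt_finrank {P : Pt} (hP : P ∉ S) : 2 * t < deg(P) := by
  by_contra hle
  obtain ⟨f, hf⟩ := h.exists_units_mem_L (D := Finsupp.single O (3 * t : ℤ) - Finsupp.single P 1)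
    (by rw [divDeg_sub, h.divDeg_single_O, divDeg_single]; omega)
  exact notMem_L_of_notMem_specialPoints hP f hf

lemma ne_O {P : Pt} (hP : P ∉ S) : P ≠ O := by
  rintro rfl
  have h1 := h.two_mul_genus_lt_finrank hP
  have h2 := h.one_le_genus
  rw [h.finrank_O] at h1
  omega

lemma single_O_apply {P : Pt} (hP : P ∉ S) (n : ℤ) : Finsupp.single O n P = 0 :=
  Finsupp.single_eq_of_ne (h.ne_O hP)

lemma apply_eq_zero_of_divDeg_le {D : Pt →₀ ℤ} (hD : 0 ≤ D) (hDt : divDeg k res D ≤ t) {P : Pt}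
    (hP : P ∉ S) : D P = 0 := by
  by_contra h0
  have h1 := finrank_le_divDeg (k := k) (res := res) hD h0
  have h2 := h.two_mul_genus_lt_finrank hP
  omega

/-- The nonzero functions that are units at all points `P ∉ S` of degree at least `e`. -/
def units (e : ℕ) : Subgroup Fˣ := ⨅ P ∈ {P | P ∉ S ∧ e ≤ deg(P)}, h.unitsAt P

lemma mem_units {e : ℕ} {f : Fˣ} :
    f ∈ h.units e ↔ ∀ P, P ∉ S → e ≤ deg(P) → ord P (f : F) = 0 := by
  simp [units, Subgroup.mem_iInf, h.mem_unitsAt]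

lemma mem_unitsAt_of_mem_units {P : Pt} (hP : P ∉ S) {f : Fˣ} (hf : f ∈ h.units deg(P)) :
    f ∈ h.unitsAt P :=
  h.mem_units.1 hf P hP le_rfl

lemma units_mono : Monotone h.units := fun _ _ hde _ hf =>
  h.mem_units.2 fun P hP hPe => h.mem_units.1 hf P hP (hde.trans hPe)

lemma mem_units_of_mem_RR {e n : ℕ} (hn : n < max e (3 * t + 1)) {l : Fˣ}
    (hl : (l : F) ∈ RR((n : ℤ))) : l ∈ h.units e := by
  rw [h.mem_units]
  intro P hP hPe
  have hlP := h.units_mem_L.1 hl P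
  rw [h.single_O_apply hP, zero_add] at hlP
  by_contra h0
  have hPn : deg(P) ≤ n := by
    by_contra! hlt
    exact h0 <| by
      simpa [h.single_O_apply hP] using
        h.add_ord_eq_zero_of_divDeg_lt hl (P := P) (by rw [h.divDeg_single_O]; omega)
  refine notMem_L_of_notMem_specialPoints hP l
    (h.mem_L_sub_single (h.RR_mono (n := 3 * t) (by omega) hl) ?_)
  rw [h.single_O_apply hP]
  omega

lemma mem_units_of_mem_RR_three_mul (e : ℕ) {l : Fˣ} (hl : (l : F) ∈ RR((3 * t : ℤ))) :
    l ∈ h.units e :=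
  h.mem_units_of_mem_RR (n := 3 * t) (by omega) (by exact_mod_cast hl)

/-- The divisors of the functions in `V`, up to multiples of `O`. -/
def principalDivisors (V : Subgroup Fˣ) : AddSubgroup (Pt →₀ ℤ) where
  carrier := {D | ∃ f ∈ V, ∃ n : ℤ, D = h.divisor f + Finsupp.single O n}
  zero_mem' := ⟨1, V.one_mem, 0, by rw [h.divisor_one, Finsupp.single_zero, add_zero]⟩
  add_mem' := by
    rintro _ _ ⟨f, hf, m, rfl⟩ ⟨g, hg, n, rfl⟩
    exact ⟨f * g, V.mul_mem hf hg, m + n, by rw [h.divisor_mul, Finsupp.single_add]; abel⟩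
  neg_mem' := by
    rintro _ ⟨f, hf, n, rfl⟩
    exact ⟨f⁻¹, V.inv_mem hf, -n, by rw [h.divisor_inv, Finsupp.single_neg, neg_add]⟩

lemma exists_add_mem_principalDivisors_of_mem_L {V : Subgroup Fˣ}
    (hV : ∀ l : Fˣ, (l : F) ∈ RR((3 * t : ℤ)) → l ∈ V) {A : Pt →₀ ℤ} (hA : 0 ≤ A) {n : ℤ}
    (hn : n ≤ 3 * t) (hnA : n - divDeg k res A ≤ t) {g : Fˣ}
    (hg : (g : F) ∈ L (Finsupp.single O n - A)) :
    ∃ B, 0 ≤ B ∧ divDeg k res B ≤ t ∧ A + B ∈ h.principalDivisors V := by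
  refine ⟨Finsupp.single O n - A + h.divisor g, h.mem_L_iff_divisor.1 hg, ?_, g,
    hV g (h.RR_mono hn ?_), n, by abel⟩
  · rwa [h.divDeg_add_divisor, divDeg_sub, h.divDeg_single_O]
  · exact h.L_mono (sub_le_self _ hA) hg

lemma exists_add_mem_principalDivisors {V : Subgroup Fˣ}
    (hV : ∀ l : Fˣ, (l : F) ∈ RR((3 * t : ℤ)) → l ∈ V) {A : Pt →₀ ℤ} (hA : 0 ≤ A)
    (hAt : divDeg k res A ≤ 2 * t) :
    ∃ B, 0 ≤ B ∧ divDeg k res B ≤ t ∧ A + B ∈ h.principalDivisors V := by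
  obtain ⟨g, hg⟩ := h.exists_units_mem_L (D := Finsupp.single O (divDeg k res A + t) - A)
    (by rw [divDeg_sub, h.divDeg_single_O]; omega)
  exact h.exists_add_mem_principalDivisors_of_mem_L hV hA (by omega) (by omega) hg

/-- The divisors that are congruent to an effective divisor of degree at most `t`, modulo divisors
of functions in `V` and multiples of `O`. -/
def reducibleDivisors {V : Subgroup Fˣ}
    (hV : ∀ l : Fˣ, (l : F) ∈ RR((3 * t : ℤ)) → l ∈ V) : AddSubgroup (Pt →₀ ℤ) where
  carrier := {D | ∃ E, 0 ≤ E ∧ divDeg k res E ≤ t ∧ D - E ∈ h.principalDivisors V}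
  zero_mem' := ⟨0, le_rfl, by rw [divDeg_zero]; omega, by rw [sub_zero]; exact zero_mem _⟩
  add_mem' := by
    rintro D D' ⟨E, hE, hEt, hDE⟩ ⟨E', hE', hEt', hDE'⟩
    obtain ⟨B, hB, hBt, hEB⟩ := h.exists_add_mem_principalDivisors hV (add_nonneg hE hE')
      (by rw [divDeg_add]; omega)
    obtain ⟨B', hB', hBt', hBB'⟩ := h.exists_add_mem_principalDivisors hV hB (by omega)
    refine ⟨B', hB', hBt', ?_⟩
    have e : D + D' - B' = (D - E) + (D' - E') + (E + E' + B) - (B + B') := by abel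
    exact e ▸ sub_mem (add_mem (add_mem hDE hDE') hEB) hBB'
  neg_mem' := by
    rintro D ⟨E, hE, hEt, hDE⟩
    obtain ⟨B, hB, hBt, hEB⟩ := h.exists_add_mem_principalDivisors hV hE (by omega)
    refine ⟨B, hB, hBt, ?_⟩
    have e : -D - B = -(D - E) - (E + B) := by abel
    exact e ▸ sub_mem (neg_mem hDE) hEB

lemma mem_reducibleDivisors_of_add_mem {V : Subgroup Fˣ}
    (hV : ∀ l : Fˣ, (l : F) ∈ RR((3 * t : ℤ)) → l ∈ V) {A : Pt →₀ ℤ}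
    (hA : ∃ B, 0 ≤ B ∧ divDeg k res B ≤ t ∧ A + B ∈ h.principalDivisors V) :
    A ∈ h.reducibleDivisors hV := by
  obtain ⟨B, hB, hBt, hAB⟩ := hA
  rw [← neg_mem_iff]
  exact ⟨B, hB, hBt, by rw [← neg_add']; exact neg_mem hAB⟩

lemma mem_of_divisor_mem_reducibleDivisors {V : Subgroup Fˣ}
    (hV : ∀ l : Fˣ, (l : F) ∈ RR((3 * t : ℤ)) → l ∈ V) {f : Fˣ}
    (hf : h.divisor f ∈ h.reducibleDivisors hV) : f ∈ V := by
  obtain ⟨E, hE, hEt, g, hg, n, e⟩ := hf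
  have hdiv : h.divisor (f / g) = E + Finsupp.single O n := by
    rw [div_eq_mul_inv, h.divisor_mul, h.divisor_inv,
      ← sub_eq_iff_eq_add'.2 (sub_eq_iff_eq_add.1 e)]
    abel
  have hn := h.divDeg_divisor (f / g)
  rw [hdiv, divDeg_add, h.divDeg_single_O] at hn
  have hfg : f / g ∈ V := by
    refine hV _ (h.mem_L_iff_divisor.2 ?_)
    rw [hdiv, add_left_comm, ← Finsupp.single_add]
    exact add_nonneg hE (Finsupp.single_nonneg.2 (by omega))
  simpa using V.mul_mem hfg hg

end IsPointedCurve

namespace IsUniformizedCurve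

variable (h : IsUniformizedCurve k F res ord ev L t O fR)
include h

lemma exists_divisor_fR {R : Pt} (hR : R ∉ S) :
    ∃ D : Pt →₀ ℤ, 0 ≤ D ∧ divDeg k res D = t ∧
      h.divisor (fR R) = Finsupp.single R 1 - D - Finsupp.single O ((deg(R) : ℤ) - t) := by
  obtain ⟨D, hD, hDt, hord⟩ := h.exists_ord_fR R hR
  exact ⟨D, hD, hDt, Finsupp.ext hord⟩

lemma exists_fR_mem_L {Q : Pt} (hQ : Q ∉ S) : ∃ D : Pt →₀ ℤ, 0 ≤ D ∧ divDeg k res D = t ∧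
    (fR Q : F) ∈ L (D + Finsupp.single O ((deg(Q) : ℤ) - t)) := by
  obtain ⟨D, hD, hDt, hdiv⟩ := h.exists_divisor_fR hQ
  refine ⟨D, hD, hDt, ?_⟩
  rw [h.mem_L_iff_divisor, hdiv, sub_sub, add_sub_cancel]
  exact Finsupp.single_nonneg.2 zero_le_one

lemma ord_fR {P Q : Pt} (hP : P ∉ S) (hQ : Q ∉ S) :
    ord P (fR Q : F) = Finsupp.single Q (1 : ℤ) P := by
  obtain ⟨D, hD, hDt, hord⟩ := h.exists_ord_fR Q hQ
  rw [hord, Finsupp.sub_apply, Finsupp.sub_apply, h.single_O_apply hP,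
    h.apply_eq_zero_of_divDeg_le hD hDt.le hP, sub_zero, sub_zero]

lemma ord_fR_of_ne {P Q : Pt} (hP : P ∉ S) (hQ : Q ∉ S) (hPQ : P ≠ Q) :
    ord P (fR Q : F) = 0 := by
  rw [h.ord_fR hP hQ, Finsupp.single_eq_of_ne hPQ]

lemma fR_mem_units {Q : Pt} (hQ : Q ∉ S) {e : ℕ} (hQe : deg(Q) < e) : fR Q ∈ h.units e :=
  h.mem_units.2 fun P hP hPe => h.ord_fR_of_ne hP hQ (by rintro rfl; omega)

lemma single_mem_reducibleDivisors {V : Subgroup Fˣ}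
    (hV : ∀ l : Fˣ, (l : F) ∈ RR((3 * t : ℤ)) → l ∈ V) {Q : Pt} (hQ : Q ∉ S → fR Q ∈ V) :
    Finsupp.single Q 1 ∈ h.reducibleDivisors hV := by
  have hdeg : divDeg k res (Finsupp.single Q 1) = deg(Q) := by rw [divDeg_single, mul_one]
  have hpos : (0 : Pt →₀ ℤ) ≤ Finsupp.single Q 1 := Finsupp.single_nonneg.2 zero_le_one
  by_cases hQS : Q ∈ S
  · apply h.mem_reducibleDivisors_of_add_mem hV
    rcases le_or_gt deg(Q) (2 * t) with hQt | hQt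
    · exact h.exists_add_mem_principalDivisors hV hpos (by omega)
    · obtain ⟨g, hg, hg0⟩ := Submodule.exists_mem_ne_zero_of_ne_bot hQS
      exact h.exists_add_mem_principalDivisors_of_mem_L hV hpos le_rfl (by omega)
        (g := Units.mk0 g hg0) hg
  · obtain ⟨D, hD, hDt, hdiv⟩ := h.exists_divisor_fR hQS
    exact ⟨D, hD, hDt.le, fR Q, hQ hQS, (deg(Q) : ℤ) - t, by rw [hdiv]; abel⟩

theorem units_le {V : Subgroup Fˣ} (hV : ∀ l : Fˣ, (l : F) ∈ RR((3 * t : ℤ)) → l ∈ V) {e : ℕ}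
    (hfR : ∀ Q ∉ S, deg(Q) < e → fR Q ∈ V) : h.units e ≤ V := by
  intro f hf
  refine h.mem_of_divisor_mem_reducibleDivisors hV ?_
  rw [← Finsupp.sum_single (h.divisor f)]
  refine AddSubgroup.sum_mem _ fun P hP => ?_
  rw [← mul_one (h.divisor f P), ← smul_eq_mul, ← Finsupp.smul_single]
  refine AddSubgroup.zsmul_mem _ (h.single_mem_reducibleDivisors hV fun hPS => ?_) _
  refine hfR P hPS (lt_of_not_ge fun hPe => ?_)
  exact Finsupp.mem_support_iff.1 hP (h.mem_units.1 hf P hPS hPe)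

lemma units_le_closure {e : ℕ} (he : e ≤ 2 * t + 1) :
    h.units e ≤ Subgroup.closure {l : Fˣ | (l : F) ∈ RR((3 * t : ℤ))} :=
  h.units_le (fun _ hl => Subgroup.subset_closure hl) fun Q hQ hQe => by
    have := h.two_mul_genus_lt_finrank hQ
    omega

end IsUniformizedCurve

namespace IsPointedCurve

variable (h : IsPointedCurve k F res ord ev L t O) {P : Pt}
  (hP : P ∉ specialPoints L t O)
include h hP

/-- The values at `P` of the functions in `L(n(O))`. -/
def values (n : ℕ) : Submodule k (res P) :=
  LinearMap.range (h.evalL (Finsupp.single O (n : ℤ)) P (h.single_O_apply hP n))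

lemma evalL_injective {n : ℕ} (hn : n < max deg(P) (3 * t + 1)) :
    Function.Injective (h.evalL (Finsupp.single O (n : ℤ)) P (h.single_O_apply hP n)) := by
  rw [injective_iff_map_eq_zero]
  rintro ⟨f, hf⟩ h0
  by_contra hf0
  have hfu : Units.mk0 f (fun hf0' => hf0 (Subtype.ext hf0')) ∈ h.units deg(P) :=
    h.mem_units_of_mem_RR hn hf
  exact h.ev_ne_zero_of_mem_unitsAt (h.mem_unitsAt_of_mem_units hP hfu) h0

lemma isRiemannFiltration_values :
    IsRiemannFiltration (h.values hP) t (max deg(P) (3 * t + 1)) where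
  monotone m n hmn := by
    rintro _ ⟨⟨f, hf⟩, rfl⟩
    exact ⟨⟨f, h.RR_mono (by exact_mod_cast hmn) hf⟩, rfl⟩
  le_finrank n hn := by
    have hn' := h.rr_ineq (Finsupp.single O (n : ℤ))
    rw [h.divDeg_single_O] at hn'
    rw [values, LinearMap.finrank_range_of_inj (h.evalL_injective hP hn)]
    omega

lemma exists_evalUnits_eq_of_mem_values {n : ℕ} (hn : n < max deg(P) (3 * t + 1)) {x : (res P)ˣ}
    (hx : (x : res P) ∈ h.values hP n) :
    ∃ l : h.unitsAt P, ((l : Fˣ) : F) ∈ RR((n : ℤ)) ∧ h.evalUnits P l = x := by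
  obtain ⟨⟨f, hf⟩, hfx⟩ := hx
  have hf0 : f ≠ 0 := by
    rintro rfl
    exact x.ne_zero (hfx ▸ h.ev_zero P)
  have hfu : Units.mk0 f hf0 ∈ h.units deg(P) := h.mem_units_of_mem_RR hn hf
  exact ⟨⟨Units.mk0 f hf0, h.mem_unitsAt_of_mem_units hP hfu⟩, hf, Units.ext hfx⟩

lemma exists_comp_evalUnits_eq {Q : Type*} (s : Fˣ → Q) :
    ∃ ψ : (res P)ˣ → Q, ∀ n < max deg(P) (3 * t + 1), ∀ l : h.unitsAt P,
      ((l : Fˣ) : F) ∈ RR((n : ℤ)) → ψ (h.evalUnits P l) = s l := by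
  let N := max deg(P) (3 * t + 1) - 1
  let B := {l : h.unitsAt P // ((l : Fˣ) : F) ∈ RR((N : ℤ))}
  have hinj : Function.Injective fun l : B => h.evalUnits P l := fun l m hlm => by
    have := h.evalL_injective hP (n := N) (by omega) (a₁ := ⟨_, l.2⟩) (a₂ := ⟨_, m.2⟩)
      (Units.ext_iff.1 hlm)
    exact Subtype.ext (Subtype.ext (Units.ext (Subtype.ext_iff.1 this)))
  refine ⟨Function.extend (fun l : B => h.evalUnits P l) (fun l : B => s l.1) fun _ => s 1,
    fun n hn l hl => ?_⟩
  exact hinj.extend_apply _ _ ⟨l, h.RR_mono (by omega) hl⟩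

end IsPointedCurve

namespace IsUniformizedCurve

variable (h : IsUniformizedCurve k F res ord ev L t O fR) {P : Pt}
  (hP : P ∉ specialPoints L t O)
include h hP

lemma symbol_sub_symbol_mem_of_ev_eq {x y : Fˣ} (hx : x ∈ h.units deg(P))
    (hy : y ∈ h.units deg(P)) {X : Pt →₀ ℤ} (hxX : (x : F) ∈ L X) (hyX : (y : F) ∈ L X)
    (hX : divDeg k res X < 2 * deg(P)) (hX0 : ∀ R ∉ S, X R = 0)
    (hxy : ev P (x : F) = ev P (y : F)) :
    symbol (fR P) x - symbol (fR P) y ∈ symbolSubgroup (h.units deg(P)) := by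
  rcases eq_or_ne x y with rfl | hne
  · rw [sub_self]; exact AddSubgroup.zero_mem _
  obtain ⟨z, hz⟩ : ∃ z : Fˣ, (z : F) = x - y :=
    ⟨Units.mk0 _ (sub_ne_zero.2 (Units.val_injective.ne hne)), rfl⟩
  have hzX : (z : F) ∈ L X := hz ▸ Submodule.sub_mem _ hxX hyX
  have hz0 : ev P (z : F) = 0 := by rw [hz, h.ev_sub_of_mem_L (hX0 P hP) hxX hyX, hxy, sub_self]
  have hzP : 0 < ord P (z : F) := (h.ev_eq_zero_iff P z z.ne_zero
    (h.regular_of_mem_L (hX0 P hP) hzX z.ne_zero)).1 hz0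
  have hzX' := h.mem_L_sub_single hzX (P := P) (by rwa [hX0 P hP, zero_add])
  have hzu : z / fR P ∈ h.units deg(P) := h.mem_units.2 fun R hR hRe => by
    have hzR := h.add_ord_eq_zero_of_divDeg_lt hzX' (P := R)
      (by rw [divDeg_sub, divDeg_single]; omega)
    rw [Finsupp.sub_apply, hX0 R hR, zero_sub, neg_add_eq_zero] at hzR
    rw [h.ord_units_div, h.ord_fR hR hP, hzR, sub_self]
  exact symbol_sub_symbol_mem hzu hx hy (by rw [← Units.val_mul, mul_div_cancel, hz])

lemma respectsProducts_of_eq_symbol {ψ : (res P)ˣ → K2 F ⧸ symbolSubgroup (h.units deg(P))}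
    (hψ : ∀ n < max deg(P) (3 * t + 1), ∀ l : h.unitsAt P, ((l : Fˣ) : F) ∈ RR((n : ℤ)) →
      ψ (h.evalUnits P l) = QuotientAddGroup.mk (symbol (fR P) l)) :
    RespectsProducts (h.values hP) (max deg(P) (3 * t + 1)) ψ := by
  intro a b a' b' ha hb ha' hb' hab hab' x y x' y' hx hy hx' hy' hxy
  obtain ⟨l, hl, rfl⟩ := h.exists_evalUnits_eq_of_mem_values hP ha hx
  obtain ⟨m, hm, rfl⟩ := h.exists_evalUnits_eq_of_mem_values hP hb hy
  obtain ⟨l', hl', rfl⟩ := h.exists_evalUnits_eq_of_mem_values hP ha' hx'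
  obtain ⟨m', hm', rfl⟩ := h.exists_evalUnits_eq_of_mem_values hP hb' hy'
  have hprod {i j : ℕ} (hij : i + j < 2 * deg(P)) {p q : Fˣ} (hp : (p : F) ∈ RR((i : ℤ)))
      (hq : (q : F) ∈ RR((j : ℤ))) : ((p * q : Fˣ) : F) ∈ RR((2 * (deg(P) : ℤ) - 1)) := by
    have hpq := h.mul_mem_L hp hq
    rw [← Finsupp.single_add] at hpq
    exact h.RR_mono (by omega) hpq
  rw [hψ a ha l hl, hψ b hb m hm, hψ a' ha' l' hl', hψ b' hb' m' hm', ← QuotientAddGroup.mk_add,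
    ← QuotientAddGroup.mk_add, ← symbol_mul_right, ← symbol_mul_right, ← sub_eq_zero,
    ← QuotientAddGroup.mk_sub, QuotientAddGroup.eq_zero_iff]
  refine h.symbol_sub_symbol_mem_of_ev_eq hP
    (mul_mem (h.mem_units_of_mem_RR ha hl) (h.mem_units_of_mem_RR hb hm))
    (mul_mem (h.mem_units_of_mem_RR ha' hl') (h.mem_units_of_mem_RR hb' hm'))
    (hprod hab hl hm) (hprod hab' hl' hm') (by rw [h.divDeg_single_O]; omega)
    (fun R hR => h.single_O_apply hR _) ?_
  rw [← map_mul, ← map_mul] at hxy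
  exact Units.ext_iff.1 hxy

lemma exists_addMonoidHom_evalUnits_div :
    ∃ Φ : Additive (res P)ˣ →+ K2 F ⧸ symbolSubgroup (h.units deg(P)),
      ∀ n < max deg(P) (3 * t + 1), ∀ l m : h.unitsAt P, ((l : Fˣ) : F) ∈ RR((n : ℤ)) →
        ((m : Fˣ) : F) ∈ RR((n : ℤ)) →
        Φ (Additive.ofMul (h.evalUnits P (l / m))) =
          QuotientAddGroup.mk (symbol (fR P) (l / m : h.unitsAt P)) := by
  have := h.finiteDimensional_res P
  have hlt := h.two_mul_genus_lt_finrank hP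
  have ht := h.one_le_genus
  obtain ⟨ψ, hψ⟩ := h.exists_comp_evalUnits_eq hP fun l =>
    (QuotientAddGroup.mk (symbol (fR P) l) : K2 F ⧸ symbolSubgroup (h.units deg(P)))
  obtain ⟨Φ, hΦ⟩ := (h.isRiemannFiltration_values hP).exists_addMonoidHom
    (h.respectsProducts_of_eq_symbol hP hψ) hlt (le_max_left _ _) (by omega) (by omega)
  refine ⟨Φ, fun n hn l m hl hm => ?_⟩
  rw [map_div, hΦ n hn _ _ ⟨⟨_, hl⟩, rfl⟩ ⟨⟨_, hm⟩, rfl⟩, hψ n hn l hl, hψ n hn m hm,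
    ← QuotientAddGroup.mk_sub, ← symbol_div_right, Subgroup.coe_div]

omit hP in
lemma exists_effective_fR_mem_L {Q : Pt} (hQ : Q ∉ S) : ∃ X : Pt →₀ ℤ, 0 ≤ X ∧
    divDeg k res X = deg(Q) ∧ (∀ R ∉ S, X R = 0) ∧ (fR Q : F) ∈ L X := by
  obtain ⟨D, hD, hDt, hQD⟩ := h.exists_fR_mem_L hQ
  have hlt := h.two_mul_genus_lt_finrank hQ
  refine ⟨_, ?_, ?_, fun R hR => ?_, hQD⟩
  · exact add_nonneg hD (Finsupp.single_nonneg.2 (by omega))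
  · rw [divDeg_add, hDt, h.divDeg_single_O, add_sub_cancel]
  · rw [Finsupp.add_apply, h.apply_eq_zero_of_divDeg_le hD hDt.le hR, h.single_O_apply hR, add_zero]

lemma exists_evalUnits_fR_eq_div {Q : Pt} (hQ : Q ∉ S) (hQP : deg(Q) < deg(P))
    (hQu : fR Q ∈ h.unitsAt P) :
    ∃ l m : h.unitsAt P, ((l : Fˣ) : F) ∈ RR(((deg(P) - 1 : ℕ) : ℤ)) ∧
      ((m : Fˣ) : F) ∈ RR(((deg(P) - 1 : ℕ) : ℤ)) ∧
      h.evalUnits P ⟨fR Q, hQu⟩ = h.evalUnits P (l / m) ∧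
      symbol (fR P) (fR Q) - symbol (fR P) (l / m : h.unitsAt P) ∈
        symbolSubgroup (h.units deg(P)) := by
  have := h.finiteDimensional_res P
  have hlt := h.two_mul_genus_lt_finrank hP
  have hn : deg(P) - 1 < max deg(P) (3 * t + 1) := by omega
  obtain ⟨c, hc, hc1⟩ := (h.isRiemannFiltration_values hP).exists_mul_mem hn hn (by omega)
    (h.evalUnits P ⟨fR Q, hQu⟩) 1
  obtain ⟨l, hl, hlc⟩ := h.exists_evalUnits_eq_of_mem_values hP hn hc
  obtain ⟨m, hm, hmc⟩ := h.exists_evalUnits_eq_of_mem_values hP hn hc1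
  rw [one_mul] at hmc
  obtain ⟨X, hX0, hXQ, hXS, hQX⟩ := h.exists_effective_fR_mem_L hQ
  refine ⟨l, m, hl, hm, by rw [map_div, hlc, hmc, mul_div_cancel_right], ?_⟩
  rw [Subgroup.coe_div, symbol_div_right, ← sub_add, sub_add_eq_add_sub, ← symbol_mul_right]
  refine h.symbol_sub_symbol_mem_of_ev_eq hP
    (mul_mem (h.fR_mem_units hQ hQP) (h.mem_units_of_mem_RR hn hm))
    (h.mem_units_of_mem_RR hn hl) (h.mul_mem_L hQX hm) (h.L_mono (le_add_of_nonneg_left hX0) hl)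
    (by rw [divDeg_add, hXQ, h.divDeg_single_O]; omega)
    (fun R hR => by rw [Finsupp.add_apply, hXS R hR, h.single_O_apply hR, add_zero]) ?_
  rw [← hmc, ← map_mul] at hlc
  exact (Units.ext_iff.1 hlc).symm

theorem exists_addMonoidHom_evalUnits :
    ∃ Φ : Additive (res P)ˣ →+ K2 F ⧸ symbolSubgroup (h.units deg(P)),
      ∀ v (hv : v ∈ h.units deg(P)),
        Φ (Additive.ofMul (h.evalUnits P ⟨v, h.mem_unitsAt_of_mem_units hP hv⟩)) =
          QuotientAddGroup.mk (symbol (fR P) v) := by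
  obtain ⟨Φ, hΦ⟩ := h.exists_addMonoidHom_evalUnits_div hP
  let V : Subgroup Fˣ :=
    { carrier := {v | ∃ hv : v ∈ h.unitsAt P,
        Φ (Additive.ofMul (h.evalUnits P ⟨v, hv⟩)) = QuotientAddGroup.mk (symbol (fR P) v)}
      one_mem' := ⟨one_mem _, by
        rw [symbol_one_right, QuotientAddGroup.mk_zero]
        exact (congrArg Φ (congrArg Additive.ofMul (map_one (h.evalUnits P)))).trans (map_zero Φ)⟩
      mul_mem' := fun {v v'} ⟨hv, hΦv⟩ ⟨hv', hΦv'⟩ => ⟨mul_mem hv hv', by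
        rw [symbol_mul_right, QuotientAddGroup.mk_add, ← hΦv, ← hΦv', ← map_add, ← ofMul_mul,
          ← map_mul]
        rfl⟩
      inv_mem' := fun {v} ⟨hv, hΦv⟩ => ⟨inv_mem hv, by
        rw [symbol_inv_right, QuotientAddGroup.mk_neg, ← hΦv, ← map_neg, ← ofMul_inv, ← map_inv]
        rfl⟩ }
  have hle : h.units deg(P) ≤ V := by
    refine h.units_le (fun l hl => ?_) fun Q hQ hQP => ?_
    · have hlu := h.mem_unitsAt_of_mem_units hP (h.mem_units_of_mem_RR_three_mul _ hl)
      have hone : (1 : F) ∈ RR((3 * t : ℤ)) :=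
        h.one_mem_L (Finsupp.single_nonneg.2 (by omega))
      have := hΦ (3 * t) (by omega) ⟨l, hlu⟩ 1 (by exact_mod_cast hl) (by exact_mod_cast hone)
      rw [div_one] at this
      exact ⟨hlu, this⟩
    · have hQu := h.mem_unitsAt_of_mem_units hP (h.fR_mem_units hQ hQP)
      obtain ⟨l, m, hl, hm, hev, hsymbol⟩ := h.exists_evalUnits_fR_eq_div hP hQ hQP hQu
      refine ⟨hQu, ?_⟩
      rw [hev, hΦ _ (by omega) l m hl hm, eq_comm, ← sub_eq_zero, ← QuotientAddGroup.mk_sub]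
      exact (QuotientAddGroup.eq_zero_iff _).2 hsymbol
  exact ⟨Φ, fun v hv => (hle hv).choose_spec⟩

end IsUniformizedCurve

namespace IsProjCurve

lemma exists_linear_relation (hC : IsProjCurve k F res ord ev L t) {f g : F}
    {D E M N : Pt →₀ ℤ} (hf : ∀ a ∈ L D, a * f ∈ L N) (hg : ∀ b ∈ L E, b * g ∈ L N)
    (hMN : M ≤ N) (hN : 2 * (t : ℤ) - 2 < divDeg k res N)
    (hdeg : divDeg k res N + 2 * t < divDeg k res D + divDeg k res E + divDeg k res M + 2) :
    ∃ a ∈ L D, ∃ b ∈ L E, ∃ c ∈ L M, a * f + b * g = c ∧ (a ≠ 0 ∨ b ≠ 0 ∨ c ≠ 0) := by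
  have := hC.finiteDimensional_L D
  have := hC.finiteDimensional_L E
  have := hC.finiteDimensional_L M
  have := hC.finiteDimensional_L N
  let φ : (L D × L E) × L M →ₗ[k] L N :=
    (((LinearMap.mulRight k f).restrict hf).coprod
      ((LinearMap.mulRight k g).restrict hg)).coprod (-Submodule.inclusion (hC.L_mono hMN))
  have hker : LinearMap.ker φ ≠ ⊥ := by
    apply LinearMap.ker_ne_bot_of_finrank_lt
    rw [Module.finrank_prod, Module.finrank_prod]
    have hD := hC.rr_ineq D
    have hE := hC.rr_ineq E
    have hM := hC.rr_ineq M
    have hN := hC.rr_eq N hN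
    omega
  obtain ⟨⟨⟨a, b⟩, c⟩, hφ, h0⟩ := Submodule.exists_mem_ne_zero_of_ne_bot hker
  refine ⟨a, a.2, b, b.2, c, c.2, ?_, ?_⟩
  · have := congrArg Subtype.val (LinearMap.mem_ker.1 hφ)
    simp only [φ, LinearMap.coprod_apply, LinearMap.neg_apply, ← sub_eq_add_neg] at this
    exact sub_eq_zero.1 this
  · by_contra! hall
    exact h0 (Prod.ext (Prod.ext (Subtype.ext hall.1) (Subtype.ext hall.2.1))
      (Subtype.ext hall.2.2))

end IsProjCurve

namespace IsUniformizedCurve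

variable (h : IsUniformizedCurve k F res ord ev L t O fR)
include h

lemma ord_mul_fR {P Q : Pt} (hP : P ∉ S) (hQ : Q ∉ S) {l : Fˣ} (hl : (l : F) ∈ RR((3 * t : ℤ))) :
    ord P ((l * fR Q : Fˣ) : F) = Finsupp.single Q (1 : ℤ) P := by
  have hlP := h.mem_unitsAt_of_mem_units hP (h.mem_units_of_mem_RR_three_mul _ hl)
  rw [h.ord_units_mul, h.mem_unitsAt.1 hlP, zero_add, h.ord_fR hP hQ]

lemma mul_fR_add_mul_fR_ne_zero {P Q : Pt} (hP : P ∉ S) (hQ : Q ∉ S) (hPQ : P ≠ Q) {a b : Fˣ}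
    (ha : (a : F) ∈ RR((3 * t : ℤ))) (hb : (b : F) ∈ RR((3 * t : ℤ))) :
    (a : F) * fR P + b * fR Q ≠ 0 := by
  intro hab
  have hnb : ((-b : Fˣ) : F) ∈ RR((3 * t : ℤ)) := Submodule.neg_mem _ hb
  have hord := h.ord_mul_fR hP hP ha
  have heq : a * fR P = -b * fR Q := Units.ext (by simpa using eq_neg_of_add_eq_zero_left hab)
  rw [heq, h.ord_mul_fR hP hQ hnb, Finsupp.single_eq_same, Finsupp.single_eq_of_ne hPQ] at hord
  exact zero_ne_one hord

lemma mul_fR_notMem_units {Q : Pt} (hQ : Q ∉ S) {l : Fˣ} (hl : (l : F) ∈ RR((3 * t : ℤ))) {e : ℕ}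
    (he : e ≤ deg(Q)) : l * fR Q ∉ h.units e := fun hu => by
  have := h.mem_units.1 hu Q hQ he
  rw [h.ord_mul_fR hQ hQ hl, Finsupp.single_eq_same] at this
  exact one_ne_zero this

lemma exists_mul_fR_add_mul_fR_mem_L {P Q : Pt} (hP : P ∉ S) (hQ : Q ∉ S) {e : ℕ}
    (hPe : deg(P) = e) (hQe : deg(Q) = e) :
    ∃ a ∈ RR((3 * t : ℤ)), ∃ b ∈ RR((3 * t : ℤ)), ∃ c ∈ RR(((e - 1 : ℕ) : ℤ)),
      a * fR P + b * fR Q = c ∧ (a ≠ 0 ∨ b ≠ 0 ∨ c ≠ 0) := by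
  have hte := h.two_mul_genus_lt_finrank hP
  obtain ⟨D, hD, hDt, hPD⟩ := h.exists_fR_mem_L hP
  obtain ⟨E, hE, hEt, hQE⟩ := h.exists_fR_mem_L hQ
  rw [hPe] at hPD hte
  rw [hQe] at hQE
  have hmul {X : Pt →₀ ℤ} {f : F} (hf : f ∈ L (X + Finsupp.single O ((e : ℤ) - t))) (a : F)
      (ha : a ∈ L (Finsupp.single O (3 * t : ℤ) - X)) : a * f ∈ RR((e + 2 * t : ℤ)) := by
    have haf := h.mul_mem_L ha hf
    rwa [← add_assoc, sub_add_cancel, ← Finsupp.single_add,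
      show (3 * t : ℤ) + ((e : ℤ) - t) = (e : ℤ) + 2 * t by ring] at haf
  obtain ⟨a, ha, b, hb, c, hc, hrel, h0⟩ := h.exists_linear_relation (hmul hPD) (hmul hQE)
    (M := Finsupp.single O ((e - 1 : ℕ) : ℤ)) (Finsupp.single_le_single.2 (by omega))
    (by rw [h.divDeg_single_O]; omega)
    (by simp only [divDeg_sub, h.divDeg_single_O, hDt, hEt]; omega)
  exact ⟨a, h.L_mono (sub_le_self _ hD) ha, b, h.L_mono (sub_le_self _ hE) hb, c, hc, hrel, h0⟩

lemma exists_units_mul_fR_add_mul_fR_eq {P Q : Pt} (hP : P ∉ S) (hQ : Q ∉ S) (hPQ : P ≠ Q) {e : ℕ}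
    (hPe : deg(P) = e) (hQe : deg(Q) = e) :
    ∃ a b c : Fˣ, (a : F) ∈ RR((3 * t : ℤ)) ∧ (b : F) ∈ RR((3 * t : ℤ)) ∧ c ∈ h.units e ∧
      (a : F) * fR P + b * fR Q = c := by
  have hte := h.two_mul_genus_lt_finrank hP
  obtain ⟨a, ha, b, hb, c, hc, hrel, h0⟩ := h.exists_mul_fR_add_mul_fR_mem_L hP hQ hPe hQe
  have hcu (u : Fˣ) (hu : u = c) : u ∈ h.units e :=
    h.mem_units_of_mem_RR (n := e - 1) (by omega) (hu ▸ hc)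
  have hne {R : Pt} (hR : R ∉ S) (hRe : deg(R) = e) {l : F} (hl : l ∈ RR((3 * t : ℤ)))
      (hl0 : l ≠ 0) : l * fR R ≠ c := fun hlc =>
    h.mul_fR_notMem_units hR (l := Units.mk0 l hl0) hl hRe.ge (hcu _ (by simpa using hlc))
  have hb0 : b ≠ 0 := by
    rintro rfl
    rw [zero_mul, add_zero] at hrel
    rcases eq_or_ne a 0 with rfl | ha0
    · rw [zero_mul] at hrel
      simp [← hrel] at h0
    · exact hne hP hPe ha ha0 hrel
  have ha0 : a ≠ 0 := by
    rintro rfl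
    rw [zero_mul, zero_add] at hrel
    exact hne hQ hQe hb hb0 hrel
  have hc0 : c ≠ 0 := hrel ▸
    h.mul_fR_add_mul_fR_ne_zero hP hQ hPQ (a := Units.mk0 a ha0) (b := Units.mk0 b hb0) ha hb
  exact ⟨Units.mk0 a ha0, Units.mk0 b hb0, Units.mk0 c hc0, ha, hb, hcu _ rfl, hrel⟩

lemma symbol_fR_fR {P Q : Pt} (hP : P ∉ S) (hQ : Q ∉ S) (hPQ : P ≠ Q) {e : ℕ}
    (hPe : deg(P) = e) (hQe : deg(Q) = e) :
    ∃ x ∈ h.units e, ∃ y ∈ h.units e,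
      symbol (fR P) (fR Q) = symbol (fR Q) x - symbol (fR P) y - symbol x y := by
  obtain ⟨a, b, c, ha, hb, hc, hrel⟩ := h.exists_units_mul_fR_add_mul_fR_eq hP hQ hPQ hPe hQe
  exact ⟨a / c, div_mem (h.mem_units_of_mem_RR_three_mul e ha) hc,
    b / c, div_mem (h.mem_units_of_mem_RR_three_mul e hb) hc, symbol_eq_of_mul_add_mul_eq hrel⟩

lemma units_succ (e : ℕ) :
    h.units (e + 1) =
      Subgroup.closure (h.units e ∪ {f : Fˣ | ∃ P, P ∉ S ∧ deg(P) = e ∧ f = fR P}) := by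
  refine le_antisymm (h.units_le (fun l hl => ?_) fun Q hQ hQe => ?_)
    ((Subgroup.closure_le _).2 (Set.union_subset (h.units_mono e.le_succ) ?_))
  · exact Subgroup.subset_closure (.inl (h.mem_units_of_mem_RR_three_mul e hl))
  · rcases Nat.lt_succ_iff_lt_or_eq.1 hQe with hlt | heq
    · exact Subgroup.subset_closure (.inl (h.fR_mem_units hQ hlt))
    · exact Subgroup.subset_closure (.inr ⟨Q, hQ, heq, rfl⟩)
  · rintro _ ⟨P, hP, hPe, rfl⟩
    exact h.fR_mem_units hP (by omega)

theorem symbolSubgroup_units_succ_le (e : ℕ) :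
    symbolSubgroup (h.units (e + 1)) ≤ symbolSubgroup (h.units e) ⊔
      AddSubgroup.closure {x | ∃ P, P ∉ S ∧ deg(P) = e ∧ ∃ v ∈ h.units e, x = symbol (fR P) v} := by
  set B := symbolSubgroup (h.units e) ⊔
    AddSubgroup.closure {x | ∃ P, P ∉ S ∧ deg(P) = e ∧ ∃ v ∈ h.units e, x = symbol (fR P) v}
  have hlow {x y : Fˣ} (hx : x ∈ h.units e) (hy : y ∈ h.units e) : symbol x y ∈ B :=
    AddSubgroup.mem_sup_left (symbol_mem_symbolSubgroup hx hy)
  have hfR {P : Pt} {v : Fˣ} (hP : P ∉ S) (hPe : deg(P) = e) (hv : v ∈ h.units e) :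
      symbol (fR P) v ∈ B :=
    AddSubgroup.mem_sup_right (AddSubgroup.subset_closure ⟨P, hP, hPe, v, hv, rfl⟩)
  rw [h.units_succ]
  apply symbolSubgroup_closure_le
  rintro f (hf | ⟨P, hP, hPe, rfl⟩) g (hg | ⟨Q, hQ, hQe, rfl⟩)
  · exact hlow hf hg
  · rw [symbol_swap]
    exact neg_mem (hfR hQ hQe hf)
  · exact hfR hP hPe hg
  · rcases eq_or_ne P Q with rfl | hPQ
    · rw [symbol_self]
      exact hfR hP hPe (h.mem_units.2 fun R _ _ => h.ord_neg_one R)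
    · obtain ⟨x, hx, y, hy, hxy⟩ := h.symbol_fR_fR hP hQ hPQ hPe hQe
      rw [hxy]
      exact sub_mem (sub_mem (hfR hQ hQe hx) (hfR hP hPe hy)) (hlow hx hy)

end IsUniformizedCurve

namespace IsProjCurve

variable {T : K2 F →+ Π₀ P : Pt, Additive (res P)ˣ} (hC : IsProjCurve k F res ord ev L t)
  (hT : IsTameSymbol ord ev T) {P : Pt}
include hC hT

lemma tame_symbol_of_mem_unitsAt {f g : Fˣ} (hf : f ∈ hC.unitsAt P) (hg : g ∈ hC.unitsAt P) :
    T (symbol f g) P = 0 := by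
  apply Additive.toMul.injective
  apply Units.ext
  rw [hT f g P, hC.mem_unitsAt.1 hf, hC.mem_unitsAt.1 hg]
  simp [hC.ev_one]

lemma tame_symbol_of_ord_eq_one {f : Fˣ} (hf : ord P (f : F) = 1) (v : hC.unitsAt P) :
    T (symbol f v) P = -Additive.ofMul (hC.evalUnits P v) := by
  rw [← ofMul_inv, ← map_inv]
  apply Additive.toMul.injective
  apply Units.ext
  rw [hT f v P, hf, hC.mem_unitsAt.1 v.2, mul_zero, zpow_zero, zpow_zero, one_mul, one_mul,
    zpow_neg_one]
  rfl

end IsProjCurve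

namespace IsPointedCurve

variable (h : IsPointedCurve k F res ord ev L t O)
include h

lemma exists_mem_units (f : Fˣ) : ∃ m, f ∈ h.units m := by
  refine ⟨(h.divisor f).support.sup (fun P => deg(P)) + 1, h.mem_units.2 fun P _ hP => ?_⟩
  by_contra h0
  have := Finset.le_sup (f := fun P => deg(P))
    (Finsupp.mem_support_iff.2 h0 : P ∈ (h.divisor f).support)
  omega

lemma symbolSubgroup_units_mono : Monotone fun e => symbolSubgroup (h.units e) :=
  fun _ _ hde => symbolSubgroup_mono (h.units_mono hde)

lemma exists_mem_symbolSubgroup_units (x : K2 F) : ∃ m, x ∈ symbolSubgroup (h.units m) := by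
  obtain ⟨x, rfl⟩ := Submodule.Quotient.mk_surjective _ x
  induction x using TensorProduct.induction_on with
  | zero => exact ⟨0, AddSubgroup.zero_mem _⟩
  | tmul a b =>
    obtain ⟨m, hm⟩ := h.exists_mem_units a.toMul
    obtain ⟨n, hn⟩ := h.exists_mem_units b.toMul
    exact ⟨max m n, symbol_mem_symbolSubgroup (h.units_mono (le_max_left m n) hm)
      (h.units_mono (le_max_right m n) hn)⟩
  | add x y hx hy =>
    obtain ⟨m, hm⟩ := hx
    obtain ⟨n, hn⟩ := hy
    exact ⟨max m n, AddSubgroup.add_mem _ (h.symbolSubgroup_units_mono (le_max_left m n) hm)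
      (h.symbolSubgroup_units_mono (le_max_right m n) hn)⟩

lemma tame_eq_zero_of_mem_symbolSubgroup {T : K2 F →+ Π₀ P : Pt, Additive (res P)ˣ}
    (hT : IsTameSymbol ord ev T) {e : ℕ} {x : K2 F} (hx : x ∈ symbolSubgroup (h.units e)) {P : Pt}
    (hP : P ∉ S) (hPe : e ≤ deg(P)) : T x P = 0 := by
  have hle : symbolSubgroup (h.units e) ≤ ((DFinsupp.evalAddMonoidHom P).comp T).ker := by
    rw [symbolSubgroup, AddSubgroup.closure_le]
    rintro _ ⟨a, ha, b, hb, rfl⟩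
    exact h.tame_symbol_of_mem_unitsAt hT (h.mem_units.1 ha P hP hPe) (h.mem_units.1 hb P hP hPe)
  exact hle hx

end IsPointedCurve

namespace IsUniformizedCurve

variable {T : K2 F →+ Π₀ P : Pt, Additive (res P)ˣ}
  (h : IsUniformizedCurve k F res ord ev L t O fR) (hT : IsTameSymbol ord ev T)
include h hT

lemma tame_symbol_fR {P : Pt} (hP : P ∉ S) (v : h.unitsAt P) :
    T (symbol (fR P) v) P = -Additive.ofMul (h.evalUnits P v) :=
  h.tame_symbol_of_ord_eq_one hT (by rw [h.ord_fR hP hP, Finsupp.single_eq_same]) v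

lemma tame_symbol_fR_of_ne {P Q : Pt} (hP : P ∉ S) (hQ : Q ∉ S) (hQP : Q ≠ P) {e : ℕ}
    (hQe : e ≤ deg(Q)) {v : Fˣ} (hv : v ∈ h.units e) : T (symbol (fR P) v) Q = 0 :=
  h.tame_symbol_of_mem_unitsAt hT (h.ord_fR_of_ne hQ hP hQP) (h.mem_units.1 hv Q hQ hQe)

lemma exists_tame_section_at {P : Pt} (hP : P ∉ S) :
    ∃ Φ : Additive (res P)ˣ →+ K2 F ⧸ symbolSubgroup (h.units deg(P)),
      ∀ v ∈ h.units deg(P), Φ (T (symbol (fR P) v) P) = QuotientAddGroup.mk (symbol (fR P) v) := by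
  obtain ⟨Φ, hΦ⟩ := h.exists_addMonoidHom_evalUnits hP
  refine ⟨-Φ, fun v hv => ?_⟩
  rw [h.tame_symbol_fR hT hP ⟨v, h.mem_unitsAt_of_mem_units hP hv⟩, AddMonoidHom.neg_apply, map_neg,
    neg_neg, hΦ v hv]

lemma exists_tame_section_fR (e : ℕ) :
    ∃ σ : (Π₀ P : Pt, Additive (res P)ˣ) →+ K2 F ⧸ symbolSubgroup (h.units e),
      (∀ y, (∀ P, P ∉ S → deg(P) = e → y P = 0) → σ y = 0) ∧
      ∀ P, P ∉ S → deg(P) = e → ∀ v ∈ h.units e,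
        σ (T (symbol (fR P) v)) = QuotientAddGroup.mk (symbol (fR P) v) := by
  classical
  have hat (P : Pt) : ∃ Φ : Additive (res P)ˣ →+ K2 F ⧸ symbolSubgroup (h.units e),
      P ∉ S ∧ deg(P) = e → ∀ v ∈ h.units e,
        Φ (T (symbol (fR P) v) P) = QuotientAddGroup.mk (symbol (fR P) v) := by
    by_cases hP : P ∉ S ∧ deg(P) = e
    · obtain ⟨hPS, rfl⟩ := hP
      exact (h.exists_tame_section_at hT hPS).imp fun _ hΦ _ => hΦ
    · exact ⟨0, fun hP' => absurd hP' hP⟩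
  choose Φ hΦ using hat
  refine ⟨(DFinsupp.sumAddHom Φ).comp (DFinsupp.filterAddMonoidHom _ fun P => P ∉ S ∧ deg(P) = e),
    fun y hy => ?_, fun P hP hPe v hv => ?_⟩
  · have hfilter : y.filter (fun P => P ∉ S ∧ deg(P) = e) = 0 := by
      ext1 P
      rw [DFinsupp.filter_apply, DFinsupp.zero_apply, ite_eq_right_iff]
      exact fun hP => hy P hP.1 hP.2
    exact (congrArg (DFinsupp.sumAddHom Φ) hfilter).trans (map_zero _)
  · have hfilter : (T (symbol (fR P) v)).filter (fun P => P ∉ S ∧ deg(P) = e) =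
        DFinsupp.single P (T (symbol (fR P) v) P) := by
      ext1 Q
      rw [DFinsupp.filter_apply]
      rcases eq_or_ne Q P with rfl | hQP
      · rw [if_pos ⟨hP, hPe⟩, DFinsupp.single_eq_same]
      · rw [DFinsupp.single_eq_of_ne hQP, ite_eq_right_iff]
        exact fun hQ => h.tame_symbol_fR_of_ne hT hP hQ.1 hQP hQ.2.ge hv
    rw [← hΦ P ⟨hP, hPe⟩ v hv, ← DFinsupp.sumAddHom_single Φ, ← hfilter]
    rfl

lemma exists_tame_section (e : ℕ) :
    ∃ σ : (Π₀ P : Pt, Additive (res P)ˣ) →+ K2 F ⧸ symbolSubgroup (h.units e),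
      (∀ y, (∀ P, P ∉ S → deg(P) = e → y P = 0) → σ y = 0) ∧
      ∀ x ∈ symbolSubgroup (h.units (e + 1)), σ (T x) = QuotientAddGroup.mk x := by
  obtain ⟨σ, hσ0, hσ⟩ := h.exists_tame_section_fR hT e
  refine ⟨σ, hσ0, fun x hx => ?_⟩
  suffices hle : symbolSubgroup (h.units e) ⊔
      AddSubgroup.closure {x | ∃ P, P ∉ S ∧ deg(P) = e ∧ ∃ v ∈ h.units e, x = symbol (fR P) v} ≤
      (σ.comp T).eqLocus (QuotientAddGroup.mk' _) from
    hle (h.symbolSubgroup_units_succ_le e hx)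
  rw [sup_le_iff, AddSubgroup.closure_le]
  refine ⟨fun z hz => ?_, ?_⟩
  · refine (hσ0 _ fun P hP hPe => ?_).trans ((QuotientAddGroup.eq_zero_iff z).2 hz).symm
    exact h.tame_eq_zero_of_mem_symbolSubgroup hT hz hP hPe.ge
  · rintro _ ⟨P, hP, hPe, v, hv, rfl⟩
    exact hσ P hP hPe v hv

theorem mem_symbolSubgroup_units_of_mem_succ {e : ℕ} {x : K2 F}
    (hx : x ∈ symbolSubgroup (h.units (e + 1))) (hTx : ∀ P, P ∉ S → deg(P) = e → T x P = 0) :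
    x ∈ symbolSubgroup (h.units e) := by
  obtain ⟨σ, hσ0, hσ⟩ := h.exists_tame_section hT e
  rw [← QuotientAddGroup.eq_zero_iff, ← hσ x hx, hσ0 _ hTx]

theorem mem_symbolSubgroup_units_iff {e : ℕ} {x : K2 F} :
    x ∈ symbolSubgroup (h.units e) ↔ ∀ P, P ∉ S → e ≤ deg(P) → T x P = 0 := by
  refine ⟨fun hx P hP hPe => h.tame_eq_zero_of_mem_symbolSubgroup hT hx hP hPe, fun hTx => ?_⟩
  obtain ⟨m, hm⟩ := h.exists_mem_symbolSubgroup_units x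
  have hdown (n : ℕ) (hx : x ∈ symbolSubgroup (h.units (e + n))) :
      x ∈ symbolSubgroup (h.units e) := by
    induction n with
    | zero => exact hx
    | succ n ih =>
      exact ih (h.mem_symbolSubgroup_units_of_mem_succ hT hx fun P hP hPe => hTx P hP (by omega))
  exact hdown m (h.symbolSubgroup_units_mono (by omega) hm)

lemma exists_tame_symbol_fR_eq {P : Pt} (hP : P ∉ S) {n : ℕ} (hPn : deg(P) ≤ n + 1)
    (hn : n < max deg(P) (3 * t + 1)) (α : Additive (res P)ˣ) :
    ∃ l m : Fˣ, (l : F) ∈ RR((n : ℤ)) ∧ (m : F) ∈ RR((n : ℤ)) ∧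
      T (symbol (fR P) (l / m)) P = α := by
  have := h.finiteDimensional_res P
  have hlt := h.two_mul_genus_lt_finrank hP
  obtain ⟨c, hc1, hcα⟩ := (h.isRiemannFiltration_values hP).exists_mul_mem hn hn (by omega)
    1 α.toMul
  obtain ⟨l, hl, hlc⟩ := h.exists_evalUnits_eq_of_mem_values hP hn hc1
  obtain ⟨m, hm, hmc⟩ := h.exists_evalUnits_eq_of_mem_values hP hn hcα
  refine ⟨l, m, hl, hm, ?_⟩
  rw [← Subgroup.coe_div, h.tame_symbol_fR hT hP, map_div, hlc, hmc, mul_div_mul_right_eq_div,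
    one_div, ofMul_inv, neg_neg]
  rfl

lemma exists_tame_eq_of_finrank_eq {e n : ℕ} (hen : e ≤ n + 1) (hn : n < max e (3 * t + 1))
    (y : Π₀ P : Pt, Additive (res P)ˣ) :
    ∃ x ∈ AddSubgroup.closure {x | ∃ (P : Pt) (l : Fˣ), P ∉ S ∧ deg(P) = e ∧
        (l : F) ∈ RR((n : ℤ)) ∧ x = symbol (fR P) l},
      ∀ P, P ∉ S → deg(P) = e → T x P = y P := by
  classical
  induction y using DFinsupp.induction with
  | h0 => exact ⟨0, AddSubgroup.zero_mem _, fun P _ _ => by rw [map_zero]⟩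
  | ha P α y hy _ ih =>
    obtain ⟨x, hx, hTx⟩ := ih
    by_cases hP : P ∉ S ∧ deg(P) = e
    · obtain ⟨hPS, rfl⟩ := hP
      obtain ⟨l, m, hl, hm, hlm⟩ := h.exists_tame_symbol_fR_eq hT hPS hen hn α
      refine ⟨symbol (fR P) (l / m) + x, AddSubgroup.add_mem _ ?_ hx, fun Q hQ hQe => ?_⟩
      · rw [symbol_div_right]
        exact AddSubgroup.sub_mem _ (AddSubgroup.subset_closure ⟨P, l, hPS, rfl, hl, rfl⟩)
          (AddSubgroup.subset_closure ⟨P, m, hPS, rfl, hm, rfl⟩)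
      · rw [map_add, DFinsupp.add_apply, DFinsupp.add_apply, hTx Q hQ hQe]
        rcases eq_or_ne Q P with rfl | hQP
        · rw [hlm, DFinsupp.single_eq_same]
        · rw [DFinsupp.single_eq_of_ne hQP, h.tame_symbol_fR_of_ne hT hPS hQ hQP hQe.ge
            (div_mem (h.mem_units_of_mem_RR hn hl) (h.mem_units_of_mem_RR hn hm))]
    · refine ⟨x, hx, fun Q hQ hQe => ?_⟩
      rw [DFinsupp.add_apply, DFinsupp.single_eq_of_ne (by rintro rfl; exact hP ⟨hQ, hQe⟩),
        zero_add, hTx Q hQ hQe]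

lemma exists_mem_symbolSubgroup_units_succ_tame_eq (e : ℕ) (y : Π₀ P : Pt, Additive (res P)ˣ) :
    ∃ x ∈ symbolSubgroup (h.units (e + 1)), ∀ P, P ∉ S → deg(P) = e → T x P = y P := by
  have hn : max (e - 1) (3 * t) < max e (3 * t + 1) := by omega
  obtain ⟨x, hx, hTx⟩ := h.exists_tame_eq_of_finrank_eq hT (by omega) hn y
  refine ⟨x, (AddSubgroup.closure_le _).2 ?_ hx, hTx⟩
  rintro _ ⟨P, l, hP, hPe, hl, rfl⟩
  exact symbol_mem_symbolSubgroup (h.fR_mem_units hP (by omega))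
    (h.units_mono e.le_succ (h.mem_units_of_mem_RR hn hl))

lemma exists_tame_eq_of_finrank_lt (n : ℕ) (y : Π₀ P : Pt, Additive (res P)ˣ)
    (hy : ∀ P, P ∉ S → n ≤ deg(P) → y P = 0) : ∃ x : K2 F, ∀ P, P ∉ S → T x P = y P := by
  induction n generalizing y with
  | zero => exact ⟨0, fun P hP => by rw [map_zero, hy P hP (Nat.zero_le _), DFinsupp.zero_apply]⟩
  | succ n ih =>
    obtain ⟨x, hx, hTx⟩ := h.exists_mem_symbolSubgroup_units_succ_tame_eq hT n y
    obtain ⟨x', hx'⟩ := ih (y - T x) fun P hP hPn => by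
      rw [DFinsupp.sub_apply]
      rcases hPn.eq_or_lt with heq | hlt
      · rw [hTx P hP heq.symm, sub_self]
      · rw [hy P hP hlt, h.tame_eq_zero_of_mem_symbolSubgroup hT hx hP hlt, sub_zero]
    refine ⟨x' + x, fun P hP => ?_⟩
    rw [map_add, DFinsupp.add_apply, hx' P hP, DFinsupp.sub_apply, sub_add_cancel]

theorem exists_tame_eq (y : Π₀ P : Pt, Additive (res P)ˣ) :
    ∃ x : K2 F, ∀ P, P ∉ S → T x P = y P := by
  classical
  refine h.exists_tame_eq_of_finrank_lt hT (y.support.sup (fun P => deg(P)) + 1) y fun P _ hP => ?_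
  by_contra h0
  have := Finset.le_sup (f := fun P => deg(P)) (DFinsupp.mem_support_iff.2 h0)
  omega

end IsUniformizedCurve

lemma Fsub'_mono {A : Set Pt} : Monotone (Fsub' k res L O t fR A) := fun _ _ hde =>
  sup_le_sup_left (AddSubgroup.closure_mono fun _ hx => by
    obtain ⟨R, l, hR, htR, hRd, hl⟩ := hx
    exact ⟨R, l, hR, htR, hRd.trans hde, hl⟩) _

namespace IsUniformizedCurve

variable {T : K2 F →+ Π₀ P : Pt, Additive (res P)ˣ}
  (h : IsUniformizedCurve k F res ord ev L t O fR)
include h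

lemma Fsub'_le_symbolSubgroup_units (d : ℕ) :
    Fsub' k res L O t fR S d ≤ symbolSubgroup (h.units (d + 1)) := by
  refine sup_le ((AddSubgroup.closure_le _).2 ?_) ((AddSubgroup.closure_le _).2 ?_)
  · rintro _ ⟨l, m, hl, hm, rfl⟩
    exact symbol_mem_symbolSubgroup (h.mem_units_of_mem_RR_three_mul _ hl)
      (h.mem_units_of_mem_RR_three_mul _ hm)
  · rintro _ ⟨R, l, hR, _, hRd, hl, rfl⟩
    exact symbol_mem_symbolSubgroup (h.fR_mem_units hR (Nat.lt_succ_of_le hRd))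
      (h.mem_units_of_mem_RR_three_mul _ hl)

lemma symbolSubgroup_units_le_Lsub {e : ℕ} (he : e ≤ 2 * t + 1) :
    symbolSubgroup (h.units e) ≤ Lsub L O (3 * t : ℤ) :=
  (symbolSubgroup_mono (h.units_le_closure he)).trans <| symbolSubgroup_closure_le
    fun l hl m hm => AddSubgroup.subset_closure ⟨l, m, hl, hm, rfl⟩

variable (hT : IsTameSymbol ord ev T)
include hT

theorem exists_mem_Fsub'_tame_eq {d : ℕ} (hd : d ≤ 3 * t + 1)
    (y : Π₀ P : Pt, Additive (res P)ˣ) :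
    ∃ x ∈ Fsub' k res L O t fR S d, ∀ P, P ∉ S → deg(P) = d → T x P = y P := by
  obtain ⟨x, hx, hTx⟩ := h.exists_tame_eq_of_finrank_eq hT hd (by omega) y
  refine ⟨x, AddSubgroup.mem_sup_right ((AddSubgroup.closure_le _).2 ?_ hx), hTx⟩
  rintro _ ⟨P, l, hP, hPd, hl, rfl⟩
  exact AddSubgroup.subset_closure
    ⟨P, l, hP, h.two_mul_genus_lt_finrank hP, hPd.le, by exact_mod_cast hl, rfl⟩

theorem Fsub'_eq_symbolSubgroup_units {d : ℕ} (hd : 2 * t ≤ d) (hd3 : d ≤ 3 * t) :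
    Fsub' k res L O t fR S d = symbolSubgroup (h.units (d + 1)) := by
  refine le_antisymm (h.Fsub'_le_symbolSubgroup_units d) ?_
  induction d, hd using Nat.le_induction with
  | base => exact (h.symbolSubgroup_units_le_Lsub le_rfl).trans le_sup_left
  | succ d _ ih =>
    intro x hx
    obtain ⟨x', hx', hTx'⟩ := h.exists_mem_Fsub'_tame_eq hT (d := d + 1) (by omega) (T x)
    have hsub : x - x' ∈ symbolSubgroup (h.units (d + 1)) :=
      h.mem_symbolSubgroup_units_of_mem_succ hT
        (AddSubgroup.sub_mem _ hx (h.Fsub'_le_symbolSubgroup_units _ hx')) fun P hP hPd => by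
          rw [map_sub, DFinsupp.sub_apply, hTx' P hP hPd, sub_self]
    rw [← sub_add_cancel x x']
    exact AddSubgroup.add_mem _ (Fsub'_mono d.le_succ (ih (by omega) hsub)) hx'

end IsUniformizedCurve

end Curve

/-- Proposition `RRprop`.  Let `C` be a regular, irreducible curve,
projective over `k`, with function field `F`, arithmetic genus `t ≥ 1` and a
`k`-rational point `O`; let `S = {P : RR_{3t}((P)) ≠ 0}` and let `F'_d` be as in
Definition 4.2(2).  Then for each `d = 2t + 1, …, 3t` the tame symbol induces
isomorphisms `F'_d / F'_{d-1} ≅ ∐_{P ∈ C_d \ S_d} k(P)^*` and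
`K₂(F) / F'_{d-1} ≅ ∐_{P ∈ C_{≥d} \ S_{≥d}} k(P)^*`; each isomorphism is expressed
by the surjectivity of the induced map together with the identification of its
kernel with `F'_{d-1}`. -/
theorem statement19 (k F : Type*) [Field k] [Field F] [Algebra k F]
    {Pt : Type*} (res : Pt → Type*) [∀ P, Field (res P)] [∀ P, Algebra k (res P)]
    (ord : Pt → F → ℤ) (ev : ∀ P, F → res P)
    (L : (Pt →₀ ℤ) → Submodule k F) (t : ℕ) (ht : 1 ≤ t)
    (hC : IsProjCurve k F res ord ev L t)
    (O : Pt) (hO : Module.finrank k (res O) = 1)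
    (T : K2 F →+ Π₀ P : Pt, Additive ((res P)ˣ)) (hT : IsTameSymbol ord ev T)
    (fR : Pt → Fˣ) (DR : Pt → (Pt →₀ ℤ))
    (hfR : ∀ R, R ≠ O → t + 1 ≤ Module.finrank k (res R) →
      (∀ Q, 0 ≤ DR R Q) ∧ divDeg k res (DR R) = t ∧
      ∀ Q, ord Q (fR R : F) =
        ((Finsupp.single R 1 - DR R -
          ((Module.finrank k (res R) : ℤ) - t) • Finsupp.single O 1 : Pt →₀ ℤ)) Q)
    (S : Set Pt)
    (hS : S = {P | L (Finsupp.single O (3 * t : ℤ) - Finsupp.single P 1) ≠ ⊥}) :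
    ∀ d : ℕ, 2 * t + 1 ≤ d → d ≤ 3 * t →
      -- the induced map `F'_d → ∐_{P ∈ C_d \ S_d} k(P)^*` is surjective …
      ((∀ y : Π₀ P : Pt, Additive ((res P)ˣ),
        ∃ x ∈ Fsub' k res L O t fR S d,
          ∀ P, P ∉ S → Module.finrank k (res P) = d → T x P = y P) ∧
      -- … with kernel `F'_{d-1}`:
      (∀ x ∈ Fsub' k res L O t fR S d,
        ((∀ P, P ∉ S → Module.finrank k (res P) = d → T x P = 0) ↔
          x ∈ Fsub' k res L O t fR S (d - 1))) ∧
      -- the induced map `K₂(F) → ∐_{P ∈ C_{≥d} \ S_{≥d}} k(P)^*` is surjective …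
      (∀ y : Π₀ P : Pt, Additive ((res P)ˣ),
        ∃ x : K2 F,
          ∀ P, P ∉ S → d ≤ Module.finrank k (res P) → T x P = y P) ∧
      -- … with kernel `F'_{d-1}`:
      (∀ x : K2 F,
        ((∀ P, P ∉ S → d ≤ Module.finrank k (res P) → T x P = 0) ↔
          x ∈ Fsub' k res L O t fR S (d - 1)))) := by
  obtain rfl : S = specialPoints L t O := hS
  have hP : IsPointedCurve k F res ord ev L t O :=
    { hC with
      one_le_genus := ht
      finrank_O := hO }
  have h : IsUniformizedCurve k F res ord ev L t O fR :=
    { hP with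
      exists_ord_fR := fun R hR => by
        have hdeg := hP.two_mul_genus_lt_finrank hR
        obtain ⟨hD, hDdeg, hord⟩ := hfR R (hP.ne_O hR) (by omega)
        exact ⟨DR R, hD, hDdeg, fun Q => by
          rw [hord Q, Finsupp.smul_single, smul_eq_mul, mul_one]⟩ }
  intro d htd hd
  have hprev : Fsub' k res L O t fR (specialPoints L t O) (d - 1) =
      symbolSubgroup (h.units d) := by
    rw [h.Fsub'_eq_symbolSubgroup_units hT (by omega) (by omega), Nat.sub_add_cancel (by omega)]
  refine ⟨h.exists_mem_Fsub'_tame_eq hT (by omega), fun x hx => ?_, fun y => ?_, fun x => ?_⟩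
  · rw [hprev]
    exact ⟨h.mem_symbolSubgroup_units_of_mem_succ hT (h.Fsub'_le_symbolSubgroup_units d hx),
      fun hx P hP hPd => h.tame_eq_zero_of_mem_symbolSubgroup hT hx hP hPd.ge⟩
  · exact (h.exists_tame_eq hT y).imp fun _ hx P hP _ => hx P hP
  · rw [hprev, h.mem_symbolSubgroup_units_iff hT]

end
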